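/- Let $\mathbb H$ be the Heisenberg group, i.e. $\mathbb R^3$ with the product $(x_1,y_1,t_1)\star(x_2,y_2,t_2)=(x_1+x_2,\,y_1+y_2,\,t_1+t_2+2(x_2y_1-x_1y_2))$, the Korányi norm $\|(x,y,t)\|=((x^2+y^2)^2+t^2)^{1/4}$, the metric $d(p,q)=\|q^{-1}\star p\|$ with open balls $B(p,r)$, and Lebesgue measure $m$, $|E|=m(E)$. A homeomorphism $f:\mathbb H\to\mathbb H$ is called quasiconformal if $$H_f(p)=\limsup_{r\to0}\frac{\sup_{d(p,q)\le r}d(f(p),f(q))}{\inf_{d(p,q)\ge r}d(f(p),f(q))}\in[0,\infty]$$ is bounded on $\mathbb H$ by a finite constant, and its Jacobian is $J_f(p)=\limsup_{r\to0}|f(B(p,r))|/|B(p,r)|\in[0,\infty]$. Suppose $(f_k)_{k\in\mathbb N}$ is a sequence of quasiconformal mappings of $\mathbb H$ converging locally uniformly (with respect to $d$) to a quasiconformal mapping $f$ of $\mathbb H$, and suppose the inverses $f_k^{-1}$ converge pointwise to $f^{-1}$. Then for every $\xi\in C_0^\infty(\mathbb R^3)$ (smooth with compact support) with $\xi\ge0$,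 the functions $J_{f_k}$ and $J_f$ are Lebesgue measurable, the integrals $\int\xi J_{f_k}\,dm$ and $\int\xi J_f\,dm$ are finite, and $$\lim_{k\to\infty}\int\xi\,J_{f_k}\,dm=\int\xi\,J_f\,dm .$$ -/

import Mathlib

open MeasureTheory Filter Set Topology
open scoped ENNReal NNReal ContDiff

noncomputable section

/-- The underlying set of the Heisenberg group: ℝ³, with its usual topology (which is also the
topology of the Korányi metric `Heis.d`), smooth structure and Lebesgue measure `volume`. -/
abbrev HG : Type := ℝ × ℝ × ℝ

namespace Heis

/-- Heisenberg group product. -/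
def mul (p q : HG) : HG :=
  (p.1 + q.1, p.2.1 + q.2.1, p.2.2 + q.2.2 + 2 * (q.1 * p.2.1 - p.1 * q.2.1))

/-- Heisenberg group inverse. -/
def inv (p : HG) : HG := (-p.1, -p.2.1, -p.2.2)

/-- Korányi norm. -/
def knorm (p : HG) : ℝ := ((p.1 ^ 2 + p.2.1 ^ 2) ^ 2 + p.2.2 ^ 2) ^ ((1 : ℝ) / 4)

/-- Korányi metric d(p,q) = ‖q⁻¹⋆p‖. -/
def d (p q : HG) : ℝ := knorm (mul (inv q) p)

/-- Open ball for the Korányi metric. -/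
def ball (p : HG) (r : ℝ) : Set HG := {q | d p q < r}

/-- Dilatation H_f(p), with values in [0,∞]: an infinite upper limit has the value `⊤`.
For a homeomorphism and `r > 0` the numerator is finite and the denominator is
positive and finite. -/
def dilat (f : HG → HG) (p : HG) : ℝ≥0∞ :=
  limsup (fun r : ℝ =>
      (⨆ q ∈ {q | d p q ≤ r}, ENNReal.ofReal (d (f p) (f q))) /
        (⨅ q ∈ {q | r ≤ d p q}, ENNReal.ofReal (d (f p) (f q))))
    (𝓝[>] 0)

/-- A homeomorphism of ℍ is quasiconformal if its dilatation is bounded by a finite constant. -/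
def IsQC (f : HG ≃ₜ HG) : Prop := ∃ M : ℝ≥0, ∀ p, dilat f p ≤ M

/-- Jacobian (upper volume derivative), with values in [0,∞]. -/
def jac (f : HG → HG) (p : HG) : ℝ≥0∞ :=
  limsup (fun r : ℝ => volume (f '' ball p r) / volume (ball p r)) (𝓝[>] 0)

/-- Locally uniform convergence with respect to the Korányi metric: uniform on every
compact set (ℍ is locally compact). -/
def ConvLocUnif (fs : ℕ → HG → HG) (f : HG → HG) : Prop :=
  ∀ K : Set HG, IsCompact K → ∀ ε > 0, ∀ᶠ m in atTop, ∀ p ∈ K, d (fs m p) (f p) < ε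

end Heis

end

/-!
A metrically quasiconformal map of `ℍ` is weakly quasisymmetric: a discrete Poincaré inequality
gives a lower bound for the energy of a function separating two large continua, while a logarithmic
cutoff of the distance in the image has small energy. If `f` maps a compact null set `E` onto a set
filling almost all of a ball, then almost all the volume of the image is carried by a thin
neighbourhood of `E`, and the Poincaré inequality applied to a distance function in the image gives
a contradiction; so `f(E)` has no density points, which is Lusin's condition (N). Therefore
`E ↦ |f(E)|` is absolutely continuous, its density is `J_f`, and `∫ ξ J_f = ∫ ξ ∘ f⁻¹`. Since
locally uniform convergence of homeomorphisms forces pointwise convergence of their inverses,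
dominated convergence finishes the proof.
-/

noncomputable section

namespace Heis

lemma sum_mul_pow_le {ι : Type*} (I : Finset ι) (n : ℕ) {f g : ι → ℝ} (hf : ∀ i ∈ I, 0 ≤ f i)
    (hg : ∀ i ∈ I, 0 ≤ g i) {a b : ℝ} (ha : 0 ≤ a) (hb : 0 ≤ b)
    (hfa : ∑ i ∈ I, f i ^ (n + 1) ≤ a ^ (n + 1)) (hgb : ∑ i ∈ I, g i ^ (n + 1) ≤ b ^ (n + 1)) :
    ∑ i ∈ I, f i * g i ^ n ≤ a * b ^ n := by
  rcases n.eq_zero_or_pos with rfl | hn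
  · simpa using hfa
  have hn0 : (0 : ℝ) < n := Nat.cast_pos.2 hn
  have hpq : ((n + 1 : ℕ) : ℝ).HolderConjugate ((n + 1 : ℕ) / n : ℝ) := by
    rw [Real.holderConjugate_iff]
    refine ⟨by push_cast; linarith, ?_⟩
    push_cast
    field_simp
    ring
  have hpow {c : ℝ} (hc : 0 ≤ c) : (c ^ n) ^ ((n + 1 : ℕ) / n : ℝ) = c ^ (n + 1) := by
    rw [← Real.rpow_natCast, ← Real.rpow_mul hc, mul_div_cancel₀ _ hn0.ne', Real.rpow_natCast]
  have hroot {c : ℝ} (hc : 0 ≤ c) : (c ^ (n + 1)) ^ (1 / ((n + 1 : ℕ) : ℝ)) = c := by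
    rw [one_div, Real.pow_rpow_inv_natCast hc n.succ_ne_zero]
  have hroot' {c : ℝ} (hc : 0 ≤ c) : (c ^ (n + 1)) ^ (1 / ((n + 1 : ℕ) / n : ℝ)) = c ^ n := by
    rw [← hpow hc, ← Real.rpow_mul (by positivity), mul_one_div_cancel (by positivity),
      Real.rpow_one]
  calc ∑ i ∈ I, f i * g i ^ n
      ≤ (∑ i ∈ I, f i ^ ((n + 1 : ℕ) : ℝ)) ^ (1 / ((n + 1 : ℕ) : ℝ)) *
          (∑ i ∈ I, (g i ^ n) ^ ((n + 1 : ℕ) / n : ℝ)) ^ (1 / ((n + 1 : ℕ) / n : ℝ)) :=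
        Real.inner_le_Lp_mul_Lq_of_nonneg I hpq hf fun i hi => pow_nonneg (hg i hi) n
    _ = (∑ i ∈ I, f i ^ (n + 1)) ^ (1 / ((n + 1 : ℕ) : ℝ)) *
          (∑ i ∈ I, g i ^ (n + 1)) ^ (1 / ((n + 1 : ℕ) / n : ℝ)) := by
        simp only [Real.rpow_natCast]
        rw [Finset.sum_congr rfl fun i hi => hpow (hg i hi)]
    _ ≤ (a ^ (n + 1)) ^ (1 / ((n + 1 : ℕ) : ℝ)) *
          (b ^ (n + 1)) ^ (1 / ((n + 1 : ℕ) / n : ℝ)) := by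
        have hf' := Finset.sum_nonneg fun i hi => pow_nonneg (hf i hi) (n + 1)
        have hg' := Finset.sum_nonneg fun i hi => pow_nonneg (hg i hi) (n + 1)
        gcongr
    _ = a * b ^ n := by rw [hroot ha, hroot' hb]

lemma sum_le_of_disjoint_measure {X ι : Type*} [MeasurableSpace X] (μ : Measure X) {I : Finset ι}
    {S : ι → Set X} {A : Set X} {a : ι → ℝ} {c : ℝ≥0∞} {C V : ℝ} (hc : c ≠ 0) (hc' : c ≠ ⊤)
    (hC : 0 ≤ C) (hV : 0 ≤ V) (hd : (I : Set ι).PairwiseDisjoint S)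
    (hm : ∀ i ∈ I, MeasurableSet (S i)) (hSA : ∀ i ∈ I, S i ⊆ A) (ha : ∀ i ∈ I, 0 ≤ a i)
    (haS : ∀ i ∈ I, ENNReal.ofReal (a i) * c ≤ ENNReal.ofReal C * μ (S i))
    (hA : μ A ≤ ENNReal.ofReal V * c) : ∑ i ∈ I, a i ≤ C * V := by
  rw [← ENNReal.ofReal_le_ofReal_iff (by positivity), ← ENNReal.mul_le_mul_iff_left hc hc']
  calc ENNReal.ofReal (∑ i ∈ I, a i) * c = ∑ i ∈ I, ENNReal.ofReal (a i) * c := by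
        rw [ENNReal.ofReal_sum_of_nonneg ha, Finset.sum_mul]
    _ ≤ ∑ i ∈ I, ENNReal.ofReal C * μ (S i) := Finset.sum_le_sum haS
    _ = ENNReal.ofReal C * μ (⋃ i ∈ I, S i) := by
        rw [measure_biUnion_finset hd hm, Finset.mul_sum]
    _ ≤ ENNReal.ofReal C * μ A := by gcongr; exact iUnion₂_subset hSA
    _ ≤ ENNReal.ofReal C * (ENNReal.ofReal V * c) := by gcongr
    _ = ENNReal.ofReal (C * V) * c := by rw [ENNReal.ofReal_mul hC, mul_assoc]

lemma length_le_sum_of_cover {ι : Type*} (I : Finset ι) (S : ι → Set ℝ) (w : ι → ℝ) {a b : ℝ}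
    (hcov : Icc a b ⊆ ⋃ i ∈ I, S i) (hw : ∀ i ∈ I, 0 ≤ w i)
    (hS : ∀ i ∈ I, ∀ s ∈ S i, ∀ t ∈ S i, |s - t| ≤ w i) : b - a ≤ ∑ i ∈ I, w i := by
  rw [← ENNReal.ofReal_le_ofReal_iff (Finset.sum_nonneg hw), ← Real.volume_Icc,
    ENNReal.ofReal_sum_of_nonneg hw]
  refine (measure_mono hcov).trans ((measure_biUnion_finset_le _ _).trans
    (Finset.sum_le_sum fun i hi => (Real.volume_le_diam _).trans (Metric.ediam_le ?_)))
  intro s hs t ht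
  rw [edist_dist]
  exact ENNReal.ofReal_le_ofReal (hS i hi s hs t ht)

lemma ofReal_mul_abs_setAverage_sub_le {X : Type*} [MeasurableSpace X] {μ : Measure X}
    {A B : Set X} (hA : μ A ≠ ⊤) (hB : μ B ≠ ⊤) {u : X → ℝ} (huA : IntegrableOn u A μ)
    (huB : IntegrableOn u B μ) :
    ENNReal.ofReal (μ.real A * μ.real B * |⨍ p in A, u p ∂μ - ⨍ p in B, u p ∂μ|) ≤
      ∫⁻ p in A, ∫⁻ q in B, ENNReal.ofReal |u p - u q| ∂μ ∂μ := by
  have : IsFiniteMeasure (μ.restrict A) := isFiniteMeasure_restrict.2 hA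
  have : IsFiniteMeasure (μ.restrict B) := isFiniteMeasure_restrict.2 hB
  have inner_eq (p : X) : ∫ q in B, (u p - u q) ∂μ = μ.real B * u p - ∫ q in B, u q ∂μ := by
    rw [integral_sub (integrable_const _) huB, setIntegral_const, smul_eq_mul]
  have double_eq : ∫ p in A, ∫ q in B, (u p - u q) ∂μ ∂μ =
      μ.real A * μ.real B * (⨍ p in A, u p ∂μ - ⨍ p in B, u p ∂μ) := by
    have hA' := measure_smul_setAverage u hA
    have hB' := measure_smul_setAverage u hB
    rw [smul_eq_mul] at hA' hB'
    simp only [inner_eq]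
    rw [integral_sub (huA.const_mul _) (integrable_const _), integral_const_mul,
      setIntegral_const, smul_eq_mul, ← hA', ← hB']
    ring
  calc ENNReal.ofReal (μ.real A * μ.real B * |⨍ p in A, u p ∂μ - ⨍ p in B, u p ∂μ|)
      = ‖∫ p in A, ∫ q in B, (u p - u q) ∂μ ∂μ‖ₑ := by
        rw [double_eq, ← ofReal_norm, Real.norm_eq_abs, abs_mul,
          abs_of_nonneg (mul_nonneg measureReal_nonneg measureReal_nonneg)]
    _ ≤ ∫⁻ p in A, ‖∫ q in B, (u p - u q) ∂μ‖ₑ ∂μ := enorm_integral_le_lintegral_enorm _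
    _ ≤ ∫⁻ p in A, ∫⁻ q in B, ‖u p - u q‖ₑ ∂μ ∂μ :=
        lintegral_mono fun p => enorm_integral_le_lintegral_enorm _
    _ = ∫⁻ p in A, ∫⁻ q in B, ENNReal.ofReal |u p - u q| ∂μ ∂μ := by
        simp only [← ofReal_norm, Real.norm_eq_abs]

lemma exists_finset_cover {X : Type*} [PseudoMetricSpace X] {K : Set X} (hK : IsCompact K)
    (r : X → ℝ) (hr : ∀ x, 0 < r x) :
    ∃ I : Finset X, (I : Set X) ⊆ K ∧
      ((I : Set X).PairwiseDisjoint fun i => Metric.closedBall i (r i / 5)) ∧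
      K ⊆ ⋃ i ∈ I, Metric.ball i (r i) := by
  obtain ⟨J, hJK, hJ⟩ := hK.elim_nhds_subcover (fun x => Metric.ball x (r x / 5))
    fun x _ => Metric.ball_mem_nhds x (div_pos (hr x) (by norm_num))
  obtain ⟨B, hB⟩ := (J.image fun a => r a / 5).bddAbove
  obtain ⟨U, hUJ, hUd, hUc⟩ := Vitali.exists_disjoint_subfamily_covering_enlargement_closedBall
    (J : Set X) id (fun a => r a / 5) B
    (fun a ha => hB (Finset.mem_coe.2 (Finset.mem_image_of_mem _ ha))) 4 (by norm_num)
  lift U to Finset X using J.finite_toSet.subset hUJ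
  refine ⟨U, fun i hi => hJK i (hUJ hi), hUd, fun x hx => ?_⟩
  obtain ⟨a, ha, hxa⟩ := mem_iUnion₂.1 (hJ hx)
  obtain ⟨b, hb, hab⟩ := hUc a ha
  have hxb := hab (Metric.ball_subset_closedBall hxa)
  refine mem_iUnion₂.2 ⟨b, hb, ?_⟩
  simp only [id, Metric.mem_closedBall] at hxb
  rw [Metric.mem_ball]
  linarith [hr b]

lemma integrableOn_ball {X : Type*} [MetricSpace X] [ProperSpace X] [MeasurableSpace X]
    [OpensMeasurableSpace X] {μ : Measure X} [IsFiniteMeasureOnCompacts μ] {u : X → ℝ}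
    (hu : Continuous u) (x : X) (R : ℝ) : IntegrableOn u (Metric.ball x R) μ :=
  (hu.continuousOn.integrableOn_compact (isCompact_closedBall x R)).mono_set
    Metric.ball_subset_closedBall

section OscBound

variable {X : Type*} [PseudoMetricSpace X]

/-- The balls `ball i (r i)`, `i ∈ I`, have radii in `(0, R]`, and `u` oscillates at most by `o i`
on them: `o i / r i` serves as a discrete upper gradient of `u` at scale `R`. -/
structure OscBound (u : X → ℝ) (I : Finset X) (r o : X → ℝ) (R : ℝ) : Prop where
  pos : ∀ i ∈ I, 0 < r i
  le : ∀ i ∈ I, r i ≤ R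
  nonneg : ∀ i ∈ I, 0 ≤ o i
  osc : ∀ i ∈ I, ∀ p ∈ Metric.ball i (r i), ∀ q ∈ Metric.ball i (r i), |u p - u q| ≤ o i

variable {u : X → ℝ} {I J : Finset X} {r o : X → ℝ} {R S T : ℝ}

lemma OscBound.mono (h : OscBound u I r o R) (hJ : J ⊆ I) (hRS : R ≤ S) : OscBound u J r o S :=
  ⟨fun i hi => h.pos i (hJ hi), fun i hi => (h.le i (hJ hi)).trans hRS,
    fun i hi => h.nonneg i (hJ hi), fun i hi => h.osc i (hJ hi)⟩

open scoped Classical in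
lemma OscBound.abs_sub_le_sum_of_path (hI : OscBound u I r o R) (hu : Continuous u) (hT : 0 ≤ T)
    {η : ℝ → X} (hη : Continuous η)
    (hcov : ∀ t ∈ Icc 0 T, η t ∈ ⋃ i ∈ I, Metric.ball i (r i)) :
    |u (η 0) - u (η T)| ≤ ∑ i ∈ I with ∃ t ∈ Icc 0 T, η t ∈ Metric.ball i (r i), o i := by
  set J := {i ∈ I | ∃ t ∈ Icc 0 T, η t ∈ Metric.ball i (r i)}
  have hJI {i : X} (hi : i ∈ J) : i ∈ I := (Finset.mem_filter.1 hi).1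
  have hcovJ : uIcc (u (η 0)) (u (η T)) ⊆ ⋃ i ∈ J, u '' Metric.ball i (r i) := by
    intro v hv
    obtain ⟨t, ht, rfl⟩ := intermediate_value_uIcc (hu.comp' hη).continuousOn hv
    rw [uIcc_of_le hT] at ht
    obtain ⟨i, hi, hti⟩ := mem_iUnion₂.1 (hcov t ht)
    exact mem_iUnion₂.2 ⟨i, Finset.mem_filter.2 ⟨hi, t, ht, hti⟩, mem_image_of_mem _ hti⟩
  have hlen := length_le_sum_of_cover J _ o hcovJ (fun i hi => hI.nonneg i (hJI hi)) (by
    rintro i hi _ ⟨p, hp, rfl⟩ _ ⟨q, hq, rfl⟩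
    exact hI.osc i (hJI hi) p hp q hq)
  rwa [max_sub_min_eq_abs, abs_sub_comm] at hlen

lemma ofReal_le_volume_time_mem_ball {η : ℝ → X} (hη : LipschitzWith 1 η) {x : X} {ρ t : ℝ}
    (hρT : ρ ≤ T / 2) (ht : t ∈ Icc 0 T) (hx : η t ∈ Metric.ball x ρ) :
    ENNReal.ofReal ρ ≤ volume (Icc 0 T ∩ η ⁻¹' Metric.ball x (2 * ρ)) := by
  have hnear : ∀ s, |s - t| ≤ ρ → η s ∈ Metric.ball x (2 * ρ) := by
    intro s hs
    have hst := hη.dist_le_mul s t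
    rw [NNReal.coe_one, one_mul, Real.dist_eq] at hst
    rw [Metric.mem_ball] at hx ⊢
    linarith [dist_triangle (η s) (η t) x]
  rcases le_total t (T / 2) with h | h
  · have hsub : Icc t (t + ρ) ⊆ Icc 0 T ∩ η ⁻¹' Metric.ball x (2 * ρ) := fun s hs =>
      ⟨⟨ht.1.trans hs.1, by linarith [hs.2]⟩, hnear s (abs_le.2 ⟨by linarith [hs.1, hs.2],
        by linarith [hs.2]⟩)⟩
    simpa using measure_mono (μ := volume) hsub
  · have hsub : Icc (t - ρ) t ⊆ Icc 0 T ∩ η ⁻¹' Metric.ball x (2 * ρ) := fun s hs =>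
      ⟨⟨by linarith [hs.1], hs.2.trans ht.2⟩, hnear s (abs_le.2 ⟨by linarith [hs.1],
        by linarith [hs.1, hs.2]⟩)⟩
    simpa using measure_mono (μ := volume) hsub

lemma OscBound.ofReal_abs_sub_le_sum_time (hI : OscBound u I r o (T / 2)) (hu : Continuous u)
    (hT : 0 ≤ T) {η : ℝ → X} (hη : LipschitzWith 1 η)
    (hcov : ∀ t ∈ Icc 0 T, η t ∈ ⋃ i ∈ I, Metric.ball i (r i)) :
    ENNReal.ofReal |u (η 0) - u (η T)| ≤ ∑ i ∈ I, ENNReal.ofReal (o i / r i) *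
      volume (Icc 0 T ∩ η ⁻¹' Metric.ball i (2 * r i)) := by
  classical
  refine (ENNReal.ofReal_le_ofReal
    (hI.abs_sub_le_sum_of_path hu hT hη.continuous hcov)).trans ?_
  rw [ENNReal.ofReal_sum_of_nonneg fun i hi => hI.nonneg i (Finset.mem_filter.1 hi).1]
  refine (Finset.sum_le_sum fun i hi => ?_).trans
    (Finset.sum_le_sum_of_subset (Finset.filter_subset _ I))
  obtain ⟨hiI, t, ht, hti⟩ := Finset.mem_filter.1 hi
  have hr := hI.pos i hiI
  calc ENNReal.ofReal (o i) = ENNReal.ofReal (o i / r i) * ENNReal.ofReal (r i) := by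
        rw [← ENNReal.ofReal_mul (div_nonneg (hI.nonneg i hiI) hr.le), div_mul_cancel₀ _ hr.ne']
    _ ≤ _ := by gcongr; exact ofReal_le_volume_time_mem_ball hη (hI.le i hiI) ht hti

end OscBound

lemma abs_setAverage_le {X : Type*} [MeasurableSpace X] {μ : Measure X} {A : Set X} {u : X → ℝ}
    {c : ℝ} (hA : μ A < ⊤) (hc : 0 ≤ c) (hu : ∀ p ∈ A, |u p| ≤ c) : |⨍ p in A, u p ∂μ| ≤ c := by
  have hint : |∫ p in A, u p ∂μ| ≤ c * μ.real A :=
    norm_setIntegral_le_of_norm_le_const (f := u) hA hu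
  rw [setAverage_eq, smul_eq_mul, abs_mul, abs_inv, abs_of_nonneg measureReal_nonneg]
  exact inv_mul_le_of_le_mul₀ measureReal_nonneg hc (by rwa [mul_comm])

lemma setAverage_const_sub {X : Type*} [MeasurableSpace X] {μ : Measure X} {A : Set X}
    {u : X → ℝ} (hA₀ : μ A ≠ 0) (hA : μ A ≠ ⊤) (hu : IntegrableOn u A μ) (c : ℝ) :
    ⨍ p in A, (c - u p) ∂μ = c - ⨍ p in A, u p ∂μ := by
  have : IsFiniteMeasure (μ.restrict A) := isFiniteMeasure_restrict.2 hA
  have hA' : μ.real A ≠ 0 := (measureReal_ne_zero_iff hA).2 hA₀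
  rw [setAverage_eq, setAverage_eq, integral_sub (integrable_const _) hu, setIntegral_const,
    smul_sub, smul_smul, inv_mul_cancel₀ hA', one_smul]

lemma abs_sub_le_of_geometric {m : ℕ → ℝ} {A q : ℝ} {N : ℕ} (hA : 0 ≤ A) (hq : 0 ≤ q)
    (hq' : q < 1) (h : ∀ j < N, |m j - m (j + 1)| ≤ A * q ^ j) : |m 0 - m N| ≤ A * (1 - q)⁻¹ :=
  calc |m 0 - m N| ≤ ∑ j ∈ Finset.range N, A * q ^ j := by
        rw [← Real.dist_eq]
        exact dist_le_range_sum_of_dist_le N fun hj => (Real.dist_eq _ _).trans_le (h _ hj)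
    _ = A * ∑ j ∈ Finset.range N, q ^ j := (Finset.mul_sum _ _ _).symm
    _ ≤ A * (1 - q)⁻¹ := by
        rw [← tsum_geometric_of_lt_one hq hq']
        gcongr
        exact (summable_geometric_of_lt_one hq hq').sum_le_tsum _ fun j _ => pow_nonneg hq j

lemma finite_of_pairwiseDisjoint_of_inter_nonempty {ι X : Type*} {U : Set ι} {S : ι → Set X}
    {F : Set X} (hU : U.PairwiseDisjoint S) (hF : F.Finite) (h : ∀ x ∈ U, (S x ∩ F).Nonempty) :
    U.Finite := by
  rcases F.eq_empty_or_nonempty with rfl | ⟨y, -⟩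
  · exact (eq_empty_of_forall_notMem fun x hx => by simpa using h x hx) ▸ finite_empty
  have : Nonempty X := ⟨y⟩
  choose! g hg using h
  exact Finite.of_injOn (fun x hx => (hg x hx).2)
    (fun x hx x' hx' hxx' => hU.elim hx hx' (not_disjoint_iff.2
      ⟨g x, (hg x hx).1, hxx' ▸ (hg x' hx').1⟩)) hF

open scoped Classical in
lemma mul_length_le_sum_of_density {X : Type*} [PseudoMetricSpace X] {I : Finset X} {w : X → ℝ}
    {K : Set X} {ρ : X → ℝ} {B c a b : ℝ} (hw : ∀ i ∈ I, 0 ≤ w i) (hc : 0 < c)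
    (hρ : ∀ x ∈ K, 0 < ρ x) (hB : ∀ x ∈ K, ρ x ≤ B)
    (hdens : ∀ x ∈ K, c * ρ x ≤ ∑ i ∈ I with dist i x < ρ x, w i) {h : X → ℝ}
    (hh : LipschitzWith 1 h) (hK : Icc a b ⊆ h '' K) : c * (b - a) ≤ 8 * ∑ i ∈ I, w i := by
  obtain ⟨U, hUK, hUd, hUc⟩ := Vitali.exists_disjoint_subfamily_covering_enlargement_closedBall
    K id ρ B hB 4 (by norm_num)
  have hUfin : U.Finite := by
    refine finite_of_pairwiseDisjoint_of_inter_nonempty hUd I.finite_toSet fun x hx => ?_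
    have hsum : 0 < ∑ i ∈ I with dist i x < ρ x, w i :=
      (mul_pos hc (hρ x (hUK hx))).trans_le (hdens x (hUK hx))
    obtain ⟨i, hi, -⟩ := Finset.exists_ne_zero_of_sum_ne_zero hsum.ne'
    exact ⟨i, (Finset.mem_filter.1 hi).2.le, (Finset.mem_filter.1 hi).1⟩
  lift U to Finset X using hUfin
  have hlen : b - a ≤ ∑ x ∈ U, 8 * ρ x := by
    refine length_le_sum_of_cover U (fun x => h '' Metric.closedBall x (4 * ρ x)) _ ?_
      (fun x hx => mul_nonneg (by norm_num) (hρ x (hUK hx)).le) ?_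
    · intro v hv
      obtain ⟨y, hy, rfl⟩ := hK hv
      obtain ⟨x, hx, hyx⟩ := hUc y hy
      exact mem_iUnion₂.2 ⟨x, hx,
        mem_image_of_mem h (hyx (Metric.mem_closedBall_self (hρ y hy).le))⟩
    · rintro x - _ ⟨p, hp, rfl⟩ _ ⟨q, hq, rfl⟩
      have hpq := hh.dist_le_mul p q
      rw [Real.dist_eq, NNReal.coe_one, one_mul] at hpq
      rw [Metric.mem_closedBall] at hp hq
      linarith [dist_triangle_right p q x]
  have hdisj : ∑ x ∈ U, ∑ i ∈ I with dist i x < ρ x, w i ≤ ∑ i ∈ I, w i := by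
    rw [← Finset.sum_biUnion fun x hx y hy hxy => Finset.disjoint_left.2 fun i hix hiy =>
      disjoint_left.1 (hUd hx hy hxy) (Finset.mem_filter.1 hix).2.le (Finset.mem_filter.1 hiy).2.le]
    exact Finset.sum_le_sum_of_subset_of_nonneg
      (Finset.biUnion_subset.2 fun x _ => Finset.filter_subset _ I) fun i hi _ => hw i hi
  calc c * (b - a) ≤ c * ∑ x ∈ U, 8 * ρ x := by gcongr
    _ = 8 * ∑ x ∈ U, c * ρ x := by rw [← Finset.mul_sum, ← Finset.mul_sum]; ring
    _ ≤ 8 * ∑ x ∈ U, ∑ i ∈ I with dist i x < ρ x, w i := by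
        gcongr with x hx
        exact hdens x (hUK hx)
    _ ≤ 8 * ∑ i ∈ I, w i := by gcongr

lemma exists_forall_dist_lt {X Y : Type*} [PseudoMetricSpace X] [PseudoMetricSpace Y] {g : X → Y}
    (hg : Continuous g) {K : Set X} (hK : IsCompact K) {ε : ℝ} (hε : 0 < ε) :
    ∃ δ > 0, ∀ x ∈ K, ∀ y, dist x y < δ → dist (g x) (g y) < ε := by
  obtain ⟨δ, hδ, h⟩ := Metric.mem_uniformity_dist.1
    (hK.uniformContinuousAt_of_continuousAt g (fun x _ => hg.continuousAt)
      (Metric.dist_mem_uniformity hε))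
  exact ⟨δ, hδ, fun x hx y hxy => h hxy hx⟩

section Differentiation

variable {X : Type*} [PseudoMetricSpace X] [MeasurableSpace X] [SecondCountableTopology X]
  [BorelSpace X] (μ : Measure X) [IsLocallyFiniteMeasure μ] [IsUnifLocDoublingMeasure μ]

lemma tendsto_closedBall_filterAt (x : X) :
    Tendsto (fun r => Metric.closedBall x r) (𝓝[>] 0)
      ((IsUnifLocDoublingMeasure.vitaliFamily μ 1).filterAt x) := by
  refine IsUnifLocDoublingMeasure.tendsto_closedBall_filterAt μ (fun _ => x) id tendsto_id ?_
  filter_upwards [self_mem_nhdsWithin] with r hr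
  exact Metric.mem_closedBall_self (by rw [one_mul]; exact le_of_lt hr)

lemma measure_eq_zero_of_frequently_lt_measure_compl {A : Set X} (hA : MeasurableSet A) {c : ℝ≥0∞}
    (hc : c ≠ 0) (hc' : c ≠ ⊤) (h : ∀ x ∈ A, ∃ᶠ r in 𝓝[>] (0 : ℝ),
      c * μ (Metric.closedBall x r) < μ (Aᶜ ∩ Metric.closedBall x r)) : μ A = 0 := by
  refine measure_eq_zero_iff_ae_notMem.2 ?_
  filter_upwards [(IsUnifLocDoublingMeasure.vitaliFamily μ
    1).ae_tendsto_measure_inter_div_of_measurableSet hA.compl] with x hlim hx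
  rw [indicator_of_notMem (not_not.2 hx)] at hlim
  obtain ⟨r, hr, hrc⟩ := ((h x hx).and_eventually
    ((hlim.comp (tendsto_closedBall_filterAt μ x)).eventually (gt_mem_nhds hc.bot_lt))).exists
  exact hr.not_ge ((ENNReal.div_le_iff_le_mul (.inr hc') (.inr hc)).1 hrc.le)

end Differentiation

section Inverse

variable {X Y ι : Type*} [TopologicalSpace X] [TopologicalSpace Y] {l : Filter ι}
  {fs : ι → X ≃ₜ Y} {f : X ≃ₜ Y}

/- A connected neighbourhood of `y` which `fs i` does not reach from the frontier of a neighbourhood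
of `f.symm y`, but reaches from its interior, has its preimage in that neighbourhood. -/
lemma tendsto_symm_apply [LocallyCompactSpace X] [T2Space X] [RegularSpace Y]
    [LocallyConnectedSpace Y] (h : Tendsto (fun i => (fs i : C(X, Y))) l (𝓝 (f : C(X, Y))))
    (y : Y) :
    Tendsto (fun i => (fs i).symm y) l (𝓝 (f.symm y)) := by
  refine ((compact_basis_nhds (f.symm y)).tendsto_right_iff).2 fun B ⟨hBx, hB⟩ => ?_
  have hfB : (f '' frontier B)ᶜ ∈ 𝓝 y := by
    refine (f.isClosedMap _ isClosed_frontier).isOpen_compl.mem_nhds ?_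
    rintro ⟨x, hx, rfl⟩
    rw [f.symm_apply_apply] at hBx
    exact hx.2 (mem_interior_iff_mem_nhds.2 hBx)
  obtain ⟨F, ⟨hFy, hF⟩, hFB⟩ := (closed_nhds_basis y).mem_iff.1 hfB
  obtain ⟨V, ⟨hV, hyV, hVc⟩, hVF⟩ := (LocallyConnectedSpace.open_connected_basis y).mem_iff.1 hFy
  have hfrontier := h.eventually (ContinuousMap.eventually_mapsTo
    (hB.of_isClosed_subset isClosed_frontier hB.isClosed.frontier_subset) hF.isOpen_compl
    fun x hx hxF => hFB hxF (mem_image_of_mem f hx))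
  have hpoint := h.eventually (ContinuousMap.eventually_mapsTo
    (isCompact_singleton (x := f.symm y)) hV (mapsTo_singleton.2 (by simpa using hyV)))
  filter_upwards [hfrontier, hpoint] with i hi hx
  have hpre : IsPreconnected (fs i ⁻¹' V) :=
    (fs i).isPreconnected_preimage.2 hVc.isPreconnected
  have hcover : fs i ⁻¹' V ⊆ interior B ∪ Bᶜ := fun z hzV =>
    (em (z ∈ interior B)).imp_right fun hz hzB =>
      hi ⟨subset_closure hzB, hz⟩ (hVF hzV)
  exact interior_subset (hpre.subset_left_of_subset_union isOpen_interior
    hB.isClosed.isOpen_compl (disjoint_compl_right.mono_left interior_subset) hcover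
    ⟨f.symm y, hx rfl, mem_interior_iff_mem_nhds.2 hBx⟩ (by simpa using hyV))

variable [MeasurableSpace Y] {μ : Measure Y}

lemma lintegral_lt_top_of_hasCompactSupport [IsFiniteMeasureOnCompacts μ]
    {ζ : Y → ℝ≥0} (hζ : Continuous ζ) (hc : HasCompactSupport ζ) : ∫⁻ y, ζ y ∂μ < ⊤ := by
  have hsupp : Function.support (fun y => (ζ y : ℝ≥0∞)) ⊆ tsupport ζ :=
    fun y hy => subset_tsupport ζ (ENNReal.coe_ne_zero.1 hy)
  rw [← setLIntegral_eq_of_support_subset hsupp]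
  exact setLIntegral_lt_top_of_isCompact hc.measure_lt_top.ne hc hζ

lemma tendsto_lintegral_comp_symm [LocallyCompactSpace X] [T2Space X] [LocallyCompactSpace Y]
    [T2Space Y] [LocallyConnectedSpace Y] [BorelSpace Y] [IsFiniteMeasureOnCompacts μ]
    [l.IsCountablyGenerated] (h : Tendsto (fun i => (fs i : C(X, Y))) l (𝓝 (f : C(X, Y))))
    {ξ : X → ℝ≥0} (hξ : Continuous ξ) (hc : HasCompactSupport ξ) :
    Tendsto (fun i => ∫⁻ y, ξ ((fs i).symm y) ∂μ) l (𝓝 (∫⁻ y, ξ (f.symm y) ∂μ)) := by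
  obtain ⟨C, hC⟩ := hξ.bddAbove_range_of_hasCompactSupport hc
  obtain ⟨K, hK, hfK⟩ := exists_compact_superset (hc.isCompact.image f.continuous)
  have hmaps : ∀ᶠ i in l, MapsTo (fs i) (tsupport ξ) K :=
    (h.eventually (ContinuousMap.eventually_mapsTo hc isOpen_interior
      (mapsTo_iff_image_subset.2 hfK))).mono fun i hi => hi.mono_right interior_subset
  have hfin : ∫⁻ y, K.indicator (fun _ => (C : ℝ≥0∞)) y ∂μ ≠ ⊤ := by
    rw [lintegral_indicator_const hK.measurableSet]
    exact ENNReal.mul_ne_top ENNReal.coe_ne_top hK.measure_lt_top.ne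
  refine tendsto_lintegral_filter_of_dominated_convergence _ (.of_forall fun i => ?_) ?_ hfin ?_
  · exact (ENNReal.continuous_coe.comp (hξ.comp (fs i).symm.continuous)).measurable
  · filter_upwards [hmaps] with i hi
    refine ae_of_all _ fun y => le_indicator_apply (fun _ => ?_) fun hy => ?_
    · exact ENNReal.coe_le_coe.2 (hC (mem_range_self _))
    · have hξy : ξ ((fs i).symm y) = 0 :=
        image_eq_zero_of_notMem_tsupport fun hy' => hy (by simpa using hi hy')
      rw [hξy, ENNReal.coe_zero]
  · exact ae_of_all _ fun y => ENNReal.tendsto_coe.2 ((hξ.tendsto _).comp (tendsto_symm_apply h y))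

end Inverse

section NormedGroup

variable {G : Type*} [NormedGroup G]

/-- `z` is reached from the identity at time `T` by a curve of speed at most one. -/
def ReachableIn (z : G) (T : ℝ) : Prop :=
  ∃ γ : ℝ → G, LipschitzWith 1 γ ∧ γ 0 = 1 ∧ γ T = z

lemma ReachableIn.mono {z : G} {S T : ℝ} (h : ReachableIn z S) (hS : 0 ≤ S) (hST : S ≤ T) :
    ReachableIn z T := by
  obtain ⟨γ, hγ, h0, hz⟩ := h
  refine ⟨fun s => γ (min s S), by
    simpa [Function.comp_def] using hγ.comp (LipschitzWith.id.min_const S), ?_, ?_⟩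
  · simp only [min_eq_left hS, h0]
  · simp only [min_eq_right hST, hz]

lemma ReachableIn.of_isometry {φ : ℝ → G} (hφ : Isometry φ) (h0 : φ 0 = 1) (a : ℝ) :
    ReachableIn (φ a) |a| := by
  rcases le_total 0 a with ha | ha
  · exact ⟨φ, hφ.lipschitz, h0, by rw [abs_of_nonneg ha]⟩
  · exact ⟨fun s => φ (-s), (hφ.comp (IsometryEquiv.neg ℝ).isometry).lipschitz, by simpa using h0,
      by
      simp only [abs_of_nonpos ha, neg_neg]⟩

lemma lipschitzWith_one_of_le {X : Type*} [PseudoMetricSpace X] {γ : ℝ → X}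
    (h : ∀ s t, s ≤ t → dist (γ s) (γ t) ≤ t - s) : LipschitzWith 1 γ := by
  refine LipschitzWith.of_dist_le_mul fun s t => ?_
  rw [NNReal.coe_one, one_mul, Real.dist_eq]
  rcases le_total s t with hst | hst
  · rw [abs_sub_comm]
    exact (h s t hst).trans (le_abs_self _)
  · rw [dist_comm]
    exact (h t s hst).trans (le_abs_self _)

lemma dist_le_sub_of_lipschitzWith_one {X : Type*} [PseudoMetricSpace X] {γ : ℝ → X}
    (h : LipschitzWith 1 γ) {s t : ℝ} (hst : s ≤ t) : dist (γ s) (γ t) ≤ t - s := by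
  simpa [Real.dist_eq, abs_sub_comm s t, abs_of_nonneg (sub_nonneg.2 hst)] using h.dist_le_mul s t

lemma ReachableIn.mul {z w : G} {S T : ℝ} (hz : ReachableIn z S) (hw : ReachableIn w T)
    (hS : 0 ≤ S) (hT : 0 ≤ T) : ReachableIn (z * w) (S + T) := by
  obtain ⟨γ, hγ, hγ0, rfl⟩ := hz
  obtain ⟨η, hη, hη0, rfl⟩ := hw
  have before {s : ℝ} (hs : s ≤ S) : γ (min s S) * η (max (s - S) 0) = γ s := by
    rw [min_eq_left hs, max_eq_right (by linarith), hη0, mul_one]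
  have after {s : ℝ} (hs : S ≤ s) : γ (min s S) * η (max (s - S) 0) = γ S * η (s - S) := by
    rw [min_eq_right hs, max_eq_left (by linarith)]
  refine ⟨fun s => γ (min s S) * η (max (s - S) 0), lipschitzWith_one_of_le fun s t hst => ?_,
    ?_, ?_⟩
  · rcases le_total t S with ht | ht
    · rw [before ht, before (hst.trans ht)]
      exact dist_le_sub_of_lipschitzWith_one hγ hst
    rcases le_total s S with hs | hs
    · rw [before hs, after ht]
      calc dist (γ s) (γ S * η (t - S)) ≤ dist (γ s) (γ S) + dist (γ S) (γ S * η (t - S)) :=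
            dist_triangle _ _ _
        _ = dist (γ s) (γ S) + dist (η 0) (η (t - S)) := by
            rw [hη0, dist_self_mul_right, dist_one_left]
        _ ≤ (S - s) + (t - S - 0) :=
            add_le_add (dist_le_sub_of_lipschitzWith_one hγ hs)
              (dist_le_sub_of_lipschitzWith_one hη (by linarith))
        _ = t - s := by ring
    · rw [after hs, after ht, dist_mul_left]
      exact (dist_le_sub_of_lipschitzWith_one hη (by linarith)).trans_eq (by ring)
  · simp only [before hS, hγ0]
  · refine (after (le_add_of_nonneg_right hT)).trans ?_
    rw [add_sub_cancel_left]

lemma lintegral_lintegral_indicator_mul {H T : Type*} [Group H] [TopologicalSpace H]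
    [SecondCountableTopology H] [MeasurableSpace H] [BorelSpace H] [ContinuousMul H]
    [MeasurableSpace T] {μ : Measure H} [SFinite μ] [μ.IsMulRightInvariant] {ν : Measure T}
    [SFinite ν] {γ : T → H} (hγ : Measurable γ) {E : Set H} (hE : MeasurableSet E) :
    ∫⁻ p, ∫⁻ t, E.indicator 1 (p * γ t) ∂ν ∂μ = ν univ * μ E := by
  have hm : Measurable fun pt : H × T => E.indicator (1 : H → ℝ≥0∞) (pt.1 * γ pt.2) :=
    (measurable_one.indicator hE).comp (measurable_fst.mul (hγ.comp measurable_snd))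
  have inner_eq (t : T) : ∫⁻ p, E.indicator (1 : H → ℝ≥0∞) (p * γ t) ∂μ = μ E := by
    rw [lintegral_mul_right_eq_self (E.indicator 1) (γ t), lintegral_indicator_one hE]
  rw [lintegral_lintegral_swap hm.aemeasurable]
  simp only [inner_eq, lintegral_const, mul_comm]

lemma OscBound.lintegral_sub_mul_le [MeasurableSpace G] [BorelSpace G] [SecondCountableTopology G]
    [IsTopologicalGroup G] {μ : Measure G} [SFinite μ] [μ.IsMulRightInvariant] {u : G → ℝ}
    {I : Finset G} {r o : G → ℝ} {T : ℝ} (hI : OscBound u I r o (T / 2)) (hu : Continuous u)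
    (hT : 0 ≤ T) {z : G} (hz : ReachableIn z T) {A : Set G} (hA : MeasurableSet A)
    (hcov : ∀ p ∈ A, Metric.closedBall p T ⊆ ⋃ i ∈ I, Metric.ball i (r i)) :
    ∫⁻ p in A, ENNReal.ofReal |u p - u (p * z)| ∂μ ≤
      ∑ i ∈ I, ENNReal.ofReal (o i / r i) *
        (ENNReal.ofReal T * μ (Metric.ball i (2 * r i))) := by
  obtain ⟨γ, hγ, hγ0, rfl⟩ := hz
  have pointwise : ∀ p ∈ A, ENNReal.ofReal |u p - u (p * γ T)| ≤
      ∑ i ∈ I, ENNReal.ofReal (o i / r i) *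
        ∫⁻ t in Icc 0 T, (Metric.ball i (2 * r i)).indicator 1 (p * γ t) := by
    intro p hp
    have hη : LipschitzWith 1 fun t => p * γ t := by
      simpa [Function.comp_def] using (isometry_mul_left p).lipschitz.comp hγ
    have hball : ∀ t ∈ Icc 0 T, p * γ t ∈ Metric.closedBall p T := by
      intro t ht
      have h := dist_le_sub_of_lipschitzWith_one hγ ht.1
      rw [hγ0, dist_one_left] at h
      rw [Metric.mem_closedBall', dist_self_mul_right]
      linarith [ht.2]
    have h := hI.ofReal_abs_sub_le_sum_time hu hT hη fun t ht => hcov p hp (hball t ht)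
    simp only [hγ0, mul_one] at h
    refine h.trans_eq (Finset.sum_congr rfl fun i _ => ?_)
    have hm : MeasurableSet ((fun t => p * γ t) ⁻¹' Metric.ball i (2 * r i)) :=
      hη.continuous.measurable measurableSet_ball
    rw [inter_comm, ← Measure.restrict_apply hm, ← lintegral_indicator_one hm]
    rfl
  have hm (i : G) : Measurable fun p : G =>
      ∫⁻ t in Icc (0 : ℝ) T, (Metric.ball i (2 * r i)).indicator (1 : G → ℝ≥0∞) (p * γ t) :=
    ((measurable_one.indicator measurableSet_ball).comp
      (measurable_fst.mul (hγ.continuous.measurable.comp measurable_snd))).lintegral_prod_right'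
  calc ∫⁻ p in A, ENNReal.ofReal |u p - u (p * γ T)| ∂μ
      ≤ ∫⁻ p, (∑ i ∈ I, ENNReal.ofReal (o i / r i) *
          ∫⁻ t in Icc 0 T, (Metric.ball i (2 * r i)).indicator 1 (p * γ t)) ∂μ :=
        (setLIntegral_mono_ae' hA (ae_of_all _ pointwise)).trans (setLIntegral_le_lintegral _ _)
    _ = _ := by
        rw [lintegral_finsetSum _ fun i _ => (hm i).const_mul _]
        refine Finset.sum_congr rfl fun i _ => ?_
        rw [lintegral_const_mul _ (hm i), lintegral_lintegral_indicator_mul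
          hγ.continuous.measurable measurableSet_ball, Measure.restrict_apply_univ,
          Real.volume_Icc, sub_zero]

end NormedGroup

/-- The Heisenberg group as a normed group for the Korányi norm: a type synonym of `HG`, which
itself carries the product metric of `ℝ × ℝ × ℝ`. -/
def Koranyi : Type := HG

namespace Koranyi

instance : TopologicalSpace Koranyi := inferInstanceAs (TopologicalSpace HG)
instance : MeasureSpace Koranyi := inferInstanceAs (MeasureSpace HG)
instance : BorelSpace Koranyi := inferInstanceAs (BorelSpace HG)
instance : SecondCountableTopology Koranyi := inferInstanceAs (SecondCountableTopology HG)
instance : SFinite (volume : Measure Koranyi) := inferInstanceAs (SFinite (volume : Measure HG))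
instance : IsLocallyFiniteMeasure (volume : Measure Koranyi) :=
  inferInstanceAs (IsLocallyFiniteMeasure (volume : Measure HG))
instance : Measure.IsOpenPosMeasure (volume : Measure Koranyi) :=
  inferInstanceAs (Measure.IsOpenPosMeasure (volume : Measure HG))

/-- The point with given coordinates. -/
def mk (x y t : ℝ) : Koranyi := (x, y, t)

/-- The first horizontal coordinate. -/
def x (p : Koranyi) : ℝ := Prod.fst p

/-- The second horizontal coordinate. -/
def y (p : Koranyi) : ℝ := (Prod.snd p).1

/-- The vertical (central) coordinate. -/
def t (p : Koranyi) : ℝ := (Prod.snd p).2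

@[simp] lemma mk_x (a b c : ℝ) : (mk a b c).x = a := rfl
@[simp] lemma mk_y (a b c : ℝ) : (mk a b c).y = b := rfl
@[simp] lemma mk_t (a b c : ℝ) : (mk a b c).t = c := rfl

@[ext] lemma ext {p q : Koranyi} (hx : p.x = q.x) (hy : p.y = q.y) (ht : p.t = q.t) : p = q :=
  Prod.ext hx (Prod.ext hy ht)

@[fun_prop] lemma continuous_x : Continuous x := continuous_fst (X := ℝ) (Y := ℝ × ℝ)

@[fun_prop] lemma continuous_y : Continuous y :=
  (continuous_fst.comp continuous_snd : Continuous fun p : ℝ × ℝ × ℝ => p.2.1)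

@[fun_prop] lemma continuous_t : Continuous t :=
  (continuous_snd.comp continuous_snd : Continuous fun p : ℝ × ℝ × ℝ => p.2.2)

@[fun_prop] lemma continuous_mk {X : Type*} [TopologicalSpace X] {f g h : X → ℝ}
    (hf : Continuous f) (hg : Continuous g) (hh : Continuous h) :
    Continuous fun s => mk (f s) (g s) (h s) :=
  (hf.prodMk (hg.prodMk hh) : Continuous fun s => ((f s, g s, h s) : ℝ × ℝ × ℝ))

instance : Mul Koranyi := ⟨Heis.mul⟩
instance : Inv Koranyi := ⟨Heis.inv⟩
instance : One Koranyi := ⟨mk 0 0 0⟩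

@[simp] lemma mul_x (p q : Koranyi) : (p * q).x = p.x + q.x := rfl
@[simp] lemma mul_y (p q : Koranyi) : (p * q).y = p.y + q.y := rfl
@[simp] lemma mul_t (p q : Koranyi) :
    (p * q).t = p.t + q.t + 2 * (q.x * p.y - p.x * q.y) := rfl
@[simp] lemma inv_x (p : Koranyi) : (p⁻¹).x = -p.x := rfl
@[simp] lemma inv_y (p : Koranyi) : (p⁻¹).y = -p.y := rfl
@[simp] lemma inv_t (p : Koranyi) : (p⁻¹).t = -p.t := rfl
@[simp] lemma one_x : (1 : Koranyi).x = 0 := rfl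
@[simp] lemma one_y : (1 : Koranyi).y = 0 := rfl
@[simp] lemma one_t : (1 : Koranyi).t = 0 := rfl

instance : Group Koranyi := Group.ofLeftAxioms
  (by intro a b c; ext <;> simp <;> ring)
  (by intro a; ext <;> simp)
  (by intro a; ext <;> simp [mul_comm])

instance : IsTopologicalGroup Koranyi where
  continuous_mul := by
    change Continuous fun p : Koranyi × Koranyi => mk (p.1.x + p.2.x) (p.1.y + p.2.y)
      (p.1.t + p.2.t + 2 * (p.2.x * p.1.y - p.1.x * p.2.y))
    fun_prop
  continuous_inv := by
    change Continuous fun p : Koranyi => mk (-p.x) (-p.y) (-p.t)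
    fun_prop

instance : Norm Koranyi := ⟨knorm⟩

lemma norm_def (p : Koranyi) : ‖p‖ = ((p.x ^ 2 + p.y ^ 2) ^ 2 + p.t ^ 2) ^ ((1 : ℝ) / 4) := rfl

lemma norm_nonneg (p : Koranyi) : 0 ≤ ‖p‖ := by rw [norm_def]; positivity

lemma norm_pow_four (p : Koranyi) : ‖p‖ ^ 4 = (p.x ^ 2 + p.y ^ 2) ^ 2 + p.t ^ 2 := by
  rw [norm_def, ← Real.rpow_natCast, ← Real.rpow_mul (by positivity)]
  norm_num

lemma norm_sq_eq_norm_complex (p : Koranyi) : ‖p‖ ^ 2 = ‖(⟨p.x ^ 2 + p.y ^ 2, p.t⟩ : ℂ)‖ := by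
  rw [← Real.sqrt_sq (sq_nonneg ‖p‖), Complex.norm_def, Complex.normSq_mk]
  congr 1
  linear_combination norm_pow_four p

lemma sq_add_sq_le_norm_sq (p : Koranyi) : p.x ^ 2 + p.y ^ 2 ≤ ‖p‖ ^ 2 := by
  rw [norm_sq_eq_norm_complex]
  exact Complex.re_le_norm ⟨p.x ^ 2 + p.y ^ 2, p.t⟩

lemma abs_t_le_norm_sq (p : Koranyi) : |p.t| ≤ ‖p‖ ^ 2 := by
  rw [norm_sq_eq_norm_complex]
  exact Complex.abs_im_le_norm ⟨p.x ^ 2 + p.y ^ 2, p.t⟩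

lemma abs_x_le_norm (p : Koranyi) : |p.x| ≤ ‖p‖ :=
  abs_le_of_sq_le_sq (by nlinarith [sq_add_sq_le_norm_sq p, sq_nonneg p.y]) (norm_nonneg p)

lemma abs_y_le_norm (p : Koranyi) : |p.y| ≤ ‖p‖ :=
  abs_le_of_sq_le_sq (by nlinarith [sq_add_sq_le_norm_sq p, sq_nonneg p.x]) (norm_nonneg p)

-- With `z = x + iy` and `w = |z|² + it`, the group law reads `w(pq) = w(p) + w(q) + 2 z(p) z̄(q)`.
lemma norm_mul_le (p q : Koranyi) : ‖p * q‖ ≤ ‖p‖ + ‖q‖ := by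
  have cross_le : ‖(⟨p.x * q.x + p.y * q.y, q.x * p.y - p.x * q.y⟩ : ℂ)‖ ≤ ‖p‖ * ‖q‖ := by
    rw [Complex.norm_def, Complex.normSq_mk]
    refine Real.sqrt_le_iff.2 ⟨mul_nonneg (norm_nonneg p) (norm_nonneg q), ?_⟩
    have := mul_le_mul (sq_add_sq_le_norm_sq p) (sq_add_sq_le_norm_sq q) (by positivity)
      (by positivity)
    nlinarith
  refine le_of_sq_le_sq ?_ (add_nonneg (norm_nonneg p) (norm_nonneg q))
  calc ‖p * q‖ ^ 2
      = ‖(⟨p.x ^ 2 + p.y ^ 2, p.t⟩ + ⟨q.x ^ 2 + q.y ^ 2, q.t⟩ +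
          (2 : ℝ) • ⟨p.x * q.x + p.y * q.y, q.x * p.y - p.x * q.y⟩ : ℂ)‖ := by
        rw [norm_sq_eq_norm_complex]
        congr 1
        apply Complex.ext
        · simp; ring
        · simp
    _ ≤ ‖p‖ ^ 2 + ‖q‖ ^ 2 + 2 * (‖p‖ * ‖q‖) := by
        refine (norm_add₃_le).trans ?_
        rw [← norm_sq_eq_norm_complex, ← norm_sq_eq_norm_complex, norm_smul, Real.norm_two]
        gcongr
    _ = (‖p‖ + ‖q‖) ^ 2 := by ring

lemma norm_inv (p : Koranyi) : ‖p⁻¹‖ = ‖p‖ := by simp [norm_def]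

lemma norm_one : ‖(1 : Koranyi)‖ = 0 := by simp [norm_def]

lemma eq_one_of_norm_eq_zero {p : Koranyi} (h : ‖p‖ = 0) : p = 1 := by
  have hx := abs_x_le_norm p
  have hy := abs_y_le_norm p
  have ht := abs_t_le_norm_sq p
  rw [h] at hx hy ht
  ext
  · simpa using hx
  · simpa using hy
  · simpa using ht

lemma continuous_norm : Continuous fun p : Koranyi => ‖p‖ := by
  simp only [norm_def]
  exact Continuous.rpow_const (by fun_prop) fun _ => Or.inr (by norm_num)

lemma tendsto_one_of_tendsto_norm {α : Type*} {l : Filter α} {f : α → Koranyi}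
    (h : Tendsto (fun a => ‖f a‖) l (𝓝 0)) : Tendsto f l (𝓝 1) := by
  have hx : Tendsto (fun a => (f a).x) l (𝓝 0) := squeeze_zero_norm (fun _ => abs_x_le_norm _) h
  have hy : Tendsto (fun a => (f a).y) l (𝓝 0) := squeeze_zero_norm (fun _ => abs_y_le_norm _) h
  have ht : Tendsto (fun a => (f a).t) l (𝓝 0) :=
    squeeze_zero_norm (fun _ => abs_t_le_norm_sq _) (by simpa using h.pow 2)
  exact (hx.prodMk_nhds (hy.prodMk_nhds ht) :
    Tendsto (fun a => (((f a).x, (f a).y, (f a).t) : ℝ × ℝ × ℝ)) l (𝓝 ((0, 0, 0) : ℝ × ℝ × ℝ)))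

/-- The Korányi metric, before its topology is identified with the one of `ℝ³`. -/
abbrev preMetric : MetricSpace Koranyi where
  dist p q := ‖p⁻¹ * q‖
  dist_self p := by simp [norm_one]
  dist_comm p q := by rw [← norm_inv]; simp
  dist_triangle p q r := by
    have : p⁻¹ * r = (p⁻¹ * q) * (q⁻¹ * r) := by group
    rw [this]
    exact norm_mul_le _ _
  eq_of_dist_eq_zero h := inv_mul_eq_one.1 (eq_one_of_norm_eq_zero h)

lemma topology_eq_preMetric : (inferInstance : TopologicalSpace Koranyi) =
    preMetric.toPseudoMetricSpace.toUniformSpace.toTopologicalSpace := by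
  refine TopologicalSpace.ext_nhds fun p => ?_
  have hn : @nhds Koranyi preMetric.toPseudoMetricSpace.toUniformSpace.toTopologicalSpace p =
      comap (fun q : Koranyi => ‖q⁻¹ * p‖) (𝓝 0) :=
    (@nhds_comap_dist Koranyi preMetric.toPseudoMetricSpace p).symm
  rw [hn]
  apply le_antisymm
  · rw [← tendsto_iff_comap]
    simpa only [inv_mul_cancel, norm_one] using
      (continuous_norm.comp' (continuous_inv.mul_const p)).tendsto p
  · have h : Tendsto (fun q : Koranyi => q⁻¹ * p) (comap (fun q : Koranyi => ‖q⁻¹ * p‖) (𝓝 0))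
        (𝓝 1) := tendsto_one_of_tendsto_norm tendsto_comap
    refine tendsto_id'.1 (?_ : Tendsto (fun q : Koranyi => q) _ _)
    simpa only [mul_inv_rev, inv_inv, mul_inv_cancel_left, inv_one, mul_one] using
      h.inv.const_mul p

instance : NormedGroup Koranyi where
  toMetricSpace := preMetric.replaceTopology topology_eq_preMetric
  dist_eq _ _ := rfl

lemma d_eq_dist (p q : Koranyi) : d p q = dist p q := by
  rw [dist_comm, dist_eq_norm_inv_mul]
  rfl

lemma ball_eq (p : Koranyi) (r : ℝ) : Heis.ball p r = Metric.ball p r :=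
  Set.ext (α := Koranyi) fun q => by
    rw [Metric.mem_ball', ← d_eq_dist]
    rfl

/-- The dilation `(x, y, t) ↦ (r x, r y, r² t)`. -/
def dil (r : ℝ) (p : Koranyi) : Koranyi := mk (r * p.x) (r * p.y) (r ^ 2 * p.t)

lemma norm_dil {r : ℝ} (hr : 0 ≤ r) (p : Koranyi) : ‖dil r p‖ = r * ‖p‖ := by
  refine (pow_left_inj₀ (norm_nonneg _) (mul_nonneg hr (norm_nonneg _)) (n := 4) (by simp)).1 ?_
  rw [mul_pow, norm_pow_four, norm_pow_four]
  simp only [dil, mk_x, mk_y, mk_t]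
  ring

lemma dil_one (p : Koranyi) : dil 1 p = p := by ext <;> simp [dil]

lemma continuous_dil (p : Koranyi) : Continuous fun r : ℝ => dil r p := by
  unfold dil
  fun_prop

lemma exists_ray (p q : Koranyi) :
    ∃ c : ℝ → Koranyi, Continuous c ∧ c 1 = q ∧ ∀ s, 0 ≤ s → dist p (c s) = s * dist p q := by
  refine ⟨fun s => p * dil s (p⁻¹ * q), (continuous_dil _).const_mul p, ?_, fun s hs => ?_⟩
  · simp only [dil_one, mul_inv_cancel_left]
  · rw [dist_self_mul_right, norm_dil hs, dist_eq_norm_inv_mul]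

instance : ProperSpace Koranyi := by
  refine ⟨fun p r => ?_⟩
  have hK : IsCompact (X := Koranyi)
      (Icc (-r) r ×ˢ Icc (-r) r ×ˢ Icc (-r ^ 2) (r ^ 2) : Set HG) :=
    isCompact_Icc.prod (isCompact_Icc.prod isCompact_Icc)
  refine (hK.image (continuous_const_mul p)).of_isClosed_subset Metric.isClosed_closedBall
    fun q hq => ⟨p⁻¹ * q, ?_, mul_inv_cancel_left p q⟩
  rw [Metric.mem_closedBall', dist_eq_norm_inv_mul] at hq
  exact ⟨abs_le.1 ((abs_x_le_norm _).trans hq), abs_le.1 ((abs_y_le_norm _).trans hq),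
    abs_le.1 ((abs_t_le_norm_sq _).trans (pow_le_pow_left₀ (norm_nonneg _) hq 2))⟩

lemma measurePreserving_shear (a b c k₁ k₂ : ℝ) : MeasurePreserving
    (fun p : Koranyi => mk (a + p.x) (b + p.y) (c + (k₁ * p.x + k₂ * p.y) + p.t)) := by
  have h (s : ℝ) : MeasurePreserving
      (fun q : ℝ × ℝ => (b + q.1, c + (k₁ * s + k₂ * q.1) + q.2)) volume volume :=
    MeasurePreserving.skew_product (g := fun y t => c + (k₁ * s + k₂ * y) + t)
      (measurePreserving_add_left volume b) (by unfold Function.uncurry; fun_prop)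
      (ae_of_all _ fun y => (measurePreserving_add_left volume _).map_eq)
  exact MeasurePreserving.skew_product (μa := (volume : Measure ℝ)) (μb := (volume : Measure ℝ))
    (μc := (volume : Measure (ℝ × ℝ))) (μd := (volume : Measure (ℝ × ℝ)))
    (g := fun s (q : ℝ × ℝ) => (b + q.1, c + (k₁ * s + k₂ * q.1) + q.2))
    (measurePreserving_add_left volume a) (by unfold Function.uncurry; fun_prop)
    (ae_of_all _ fun s => (h s).map_eq)

instance : (volume : Measure Koranyi).IsMulLeftInvariant := ⟨fun p => by
  convert (measurePreserving_shear p.x p.y p.t (2 * p.y) (-2 * p.x)).map_eq using 2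
  ext q : 1
  ext <;> simp; ring⟩

instance : (volume : Measure Koranyi).IsMulRightInvariant := ⟨fun p => by
  convert (measurePreserving_shear p.x p.y p.t (-2 * p.y) (2 * p.x)).map_eq using 2
  ext q : 1
  ext <;> simp <;> ring⟩

lemma volume_preimage_dil {r : ℝ} (hr : 0 < r) (s : Set Koranyi) :
    volume (dil r ⁻¹' s) = ENNReal.ofReal ((r ^ 4)⁻¹) * volume s := by
  let g : HG →ₗ[ℝ] HG := LinearMap.prodMap (r • LinearMap.id)
    (LinearMap.prodMap (r • LinearMap.id) (r ^ 2 • LinearMap.id))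
  have hg : LinearMap.det g = r ^ 4 := by
    simp only [g, LinearMap.det_prodMap, LinearMap.det_smul, LinearMap.det_id,
      Module.finrank_self, mul_one]
    ring
  have : (volume : Measure (ℝ × ℝ)).IsAddHaarMeasure :=
    inferInstanceAs ((volume : Measure ℝ).prod (volume : Measure ℝ)).IsAddHaarMeasure
  have : (volume : Measure HG).IsAddHaarMeasure :=
    inferInstanceAs ((volume : Measure ℝ).prod (volume : Measure (ℝ × ℝ))).IsAddHaarMeasure
  have h := Measure.addHaar_preimage_linearMap (volume : Measure HG) (f := g)
    (by rw [hg]; positivity) s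
  rw [hg, abs_of_pos (by positivity)] at h
  exact h

/-- The volume of the unit ball. -/
def unitBallVolume : ℝ≥0∞ := volume (Metric.ball (1 : Koranyi) 1)

lemma unitBallVolume_pos : 0 < unitBallVolume := Metric.measure_ball_pos _ _ one_pos

lemma unitBallVolume_lt_top : unitBallVolume < ⊤ := measure_ball_lt_top

lemma volume_ball (p : Koranyi) {r : ℝ} (hr : 0 ≤ r) :
    volume (Metric.ball p r) = ENNReal.ofReal (r ^ 4) * unitBallVolume := by
  rcases hr.eq_or_lt with rfl | hr
  · simp
  have h : Metric.ball p r = (fun q => p⁻¹ * q) ⁻¹' (dil r⁻¹ ⁻¹' Metric.ball 1 1) := by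
    ext q
    simp only [mem_preimage, Metric.mem_ball']
    rw [dist_one_left, norm_dil (by positivity), dist_eq_norm_inv_mul, inv_mul_lt_iff₀ hr, mul_one]
  rw [h, measure_preimage_mul, volume_preimage_dil (by positivity), inv_pow, inv_inv,
    unitBallVolume]

lemma volume_closedBall (p : Koranyi) {r : ℝ} (hr : 0 ≤ r) :
    volume (Metric.closedBall p r) = ENNReal.ofReal (r ^ 4) * unitBallVolume := by
  apply le_antisymm
  · have h : Tendsto (fun s : ℝ => ENNReal.ofReal (s ^ 4) * unitBallVolume) (𝓝[>] r)
        (𝓝 (ENNReal.ofReal (r ^ 4) * unitBallVolume)) :=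
      ENNReal.Tendsto.mul_const ((ENNReal.continuous_ofReal.tendsto _).comp
        (((continuous_pow 4).tendsto r).mono_left nhdsWithin_le_nhds))
        (Or.inr unitBallVolume_lt_top.ne)
    refine ge_of_tendsto h ?_
    filter_upwards [self_mem_nhdsWithin] with s hs
    rw [← volume_ball p (hr.trans (le_of_lt hs))]
    exact measure_mono (Metric.closedBall_subset_ball hs)
  · rw [← volume_ball p hr]
    exact measure_mono Metric.ball_subset_closedBall

instance : IsUnifLocDoublingMeasure (volume : Measure Koranyi) := ⟨⟨16, by
  filter_upwards [self_mem_nhdsWithin] with r hr x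
  have hr : (0 : ℝ) < r := hr
  rw [volume_closedBall x hr.le, volume_closedBall x (by positivity), mul_pow,
    ENNReal.ofReal_mul (by positivity), ← mul_assoc]
  gcongr
  norm_num⟩⟩

end Koranyi

namespace Koranyi

lemma isometry_mk_x : Isometry fun s => mk s 0 0 := Isometry.of_dist_eq fun s t => by
  refine (pow_left_inj₀ dist_nonneg dist_nonneg (n := 4) (by simp)).1 ?_
  rw [dist_eq_norm_inv_mul, norm_pow_four, Real.dist_eq, Even.pow_abs ⟨2, rfl⟩]
  simp only [mul_x, mul_y, mul_t, inv_x, inv_y, inv_t, mk_x, mk_y, mk_t]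
  ring

lemma isometry_mk_y : Isometry fun s => mk 0 s 0 := Isometry.of_dist_eq fun s t => by
  refine (pow_left_inj₀ dist_nonneg dist_nonneg (n := 4) (by simp)).1 ?_
  rw [dist_eq_norm_inv_mul, norm_pow_four, Real.dist_eq, Even.pow_abs ⟨2, rfl⟩]
  simp only [mul_x, mul_y, mul_t, inv_x, inv_y, inv_t, mk_x, mk_y, mk_t]
  ring

lemma reachableIn_vertical {τ c : ℝ} (hc : 0 ≤ c) (hτ : |τ| ≤ 4 * c ^ 2) :
    ReachableIn (mk 0 0 τ) (4 * c) := by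
  set a : ℝ := √|τ| / 2
  have ha : 0 ≤ a := by positivity
  have ha_sq : 4 * a ^ 2 = |τ| := by
    rw [div_pow, Real.sq_sqrt (abs_nonneg _)]
    ring
  have hac : a ≤ c := abs_le_of_sq_le_sq' (by linarith) hc |>.2
  obtain ⟨b, hb, hab⟩ : ∃ b, |b| = a ∧ -4 * a * b = τ := by
    rcases le_total 0 τ with h | h
    · rw [abs_of_nonneg h] at ha_sq
      exact ⟨-a, by rw [abs_neg, abs_of_nonneg ha], by linarith⟩
    · rw [abs_of_nonpos h] at ha_sq
      exact ⟨a, abs_of_nonneg ha, by linarith⟩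
  have commutator_eq : mk a 0 0 * mk 0 b 0 * (mk (-a) 0 0 * mk 0 (-b) 0) = mk 0 0 τ := by
    ext <;> simp
    linear_combination hab
  have hx (s : ℝ) : ReachableIn (mk s 0 0) |s| := .of_isometry isometry_mk_x rfl s
  have hy (s : ℝ) : ReachableIn (mk 0 s 0) |s| := .of_isometry isometry_mk_y rfl s
  rw [← commutator_eq]
  refine (((hx a).mul (hy b) (abs_nonneg _) (abs_nonneg _)).mul
    ((hx (-a)).mul (hy (-b)) (abs_nonneg _) (abs_nonneg _)) (by positivity) (by positivity)).mono
    (by positivity) ?_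
  rw [abs_neg, abs_neg, abs_of_nonneg ha, hb]
  linarith

lemma reachableIn_of_norm_le {z : Koranyi} {R : ℝ} (hR : ‖z‖ ≤ R) : ReachableIn z (6 * R) := by
  have htwist : |z.t + 2 * z.x * z.y| ≤ 4 * ‖z‖ ^ 2 := by
    have ht := abs_le.1 (abs_t_le_norm_sq z)
    have hxy := sq_add_sq_le_norm_sq z
    rw [abs_le]
    constructor <;> nlinarith [sq_nonneg (z.x + z.y), sq_nonneg (z.x - z.y)]
  have z_eq : mk z.x 0 0 * mk 0 z.y 0 * mk 0 0 (z.t + 2 * z.x * z.y) = z := by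
    ext <;> simp
    ring
  rw [← z_eq]
  refine (((ReachableIn.of_isometry isometry_mk_x rfl z.x).mul
    (.of_isometry isometry_mk_y rfl z.y) (abs_nonneg _) (abs_nonneg _)).mul
    (reachableIn_vertical (norm_nonneg z) htwist) (by positivity)
    (mul_nonneg zero_le_four (norm_nonneg z))).mono ?_ ?_
  · have := norm_nonneg z
    positivity
  · linarith [abs_x_le_norm z, abs_y_le_norm z]

section Poincare

variable {u : Koranyi → ℝ} {I : Finset Koranyi} {r o : Koranyi → ℝ} {R : ℝ}

lemma lintegral_sub_mul_le (hI : OscBound u I r o R) (hu : Continuous u) (hR : 0 < R)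
    {x₀ : Koranyi} (hcov : Metric.closedBall x₀ (13 * R) ⊆ ⋃ i ∈ I, Metric.ball i (r i))
    {z : Koranyi} (hz : ‖z‖ ≤ 2 * R) :
    ∫⁻ p in Metric.ball x₀ R, ENNReal.ofReal |u p - u (p * z)| ≤
      ENNReal.ofReal (192 * R * ∑ i ∈ I, o i * r i ^ 3) * unitBallVolume := by
  have hI' : OscBound u I r o (6 * (2 * R) / 2) := hI.mono subset_rfl (by linarith)
  refine (hI'.lintegral_sub_mul_le hu (by positivity) (reachableIn_of_norm_le hz)
    measurableSet_ball fun p hp => ?_).trans_eq ?_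
  · refine (Metric.closedBall_subset_closedBall' ?_).trans hcov
    linarith [Metric.mem_ball.1 hp]
  · rw [Finset.mul_sum, ENNReal.ofReal_sum_of_nonneg fun i hi => ?_, Finset.sum_mul]
    · refine Finset.sum_congr rfl fun i hi => ?_
      have hr := hI.pos i hi
      have ho := hI.nonneg i hi
      rw [volume_ball i (by positivity), ← mul_assoc, ← mul_assoc,
        ← ENNReal.ofReal_mul (by positivity), ← ENNReal.ofReal_mul (by positivity)]
      congr 2
      field_simp
      ring
    · have hr := hI.pos i hi
      have ho := hI.nonneg i hi
      positivity

lemma lintegral_lintegral_sub_le (hI : OscBound u I r o R) (hu : Continuous u) (hR : 0 < R)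
    {x₀ : Koranyi} (hcov : Metric.closedBall x₀ (13 * R) ⊆ ⋃ i ∈ I, Metric.ball i (r i)) :
    ∫⁻ p in Metric.ball x₀ R, ∫⁻ q in Metric.ball x₀ R, ENNReal.ofReal |u p - u q| ≤
      ENNReal.ofReal (3072 * R ^ 5 * ∑ i ∈ I, o i * r i ^ 3) * unitBallVolume ^ 2 := by
  have hc : Continuous fun pz : Koranyi × Koranyi =>
      ENNReal.ofReal |u pz.1 - u (pz.1 * pz.2)| :=
    ENNReal.continuous_ofReal.comp' (by fun_prop)
  have translate_le : ∀ p ∈ Metric.ball x₀ R, ∫⁻ q in Metric.ball x₀ R, ENNReal.ofReal |u p - u q| ≤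
      ∫⁻ z in Metric.ball 1 (2 * R), ENNReal.ofReal |u p - u (p * z)| := by
    intro p hp
    rw [← lintegral_indicator measurableSet_ball, ← lintegral_indicator measurableSet_ball,
      ← lintegral_mul_left_eq_self _ p]
    refine lintegral_mono fun z => ?_
    by_cases hz : p * z ∈ Metric.ball x₀ R
    · have hz' : z ∈ Metric.ball 1 (2 * R) := by
        rw [Metric.mem_ball] at hp hz
        rw [Metric.mem_ball', dist_one_left, ← dist_self_mul_right z p]
        linarith [dist_triangle_right p (p * z) x₀]
      simp [hz, hz']
    · simp [hz]
  calc ∫⁻ p in Metric.ball x₀ R, ∫⁻ q in Metric.ball x₀ R, ENNReal.ofReal |u p - u q|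
      ≤ ∫⁻ p in Metric.ball x₀ R, ∫⁻ z in Metric.ball 1 (2 * R),
          ENNReal.ofReal |u p - u (p * z)| :=
        setLIntegral_mono_ae' measurableSet_ball (ae_of_all _ translate_le)
    _ = ∫⁻ z in Metric.ball 1 (2 * R), ∫⁻ p in Metric.ball x₀ R,
          ENNReal.ofReal |u p - u (p * z)| :=
        lintegral_lintegral_swap hc.measurable.aemeasurable
    _ ≤ ∫⁻ z in Metric.ball (1 : Koranyi) (2 * R),
          ENNReal.ofReal (192 * R * ∑ i ∈ I, o i * r i ^ 3) * unitBallVolume :=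
        setLIntegral_mono_ae' measurableSet_ball (ae_of_all _ fun z hz =>
          lintegral_sub_mul_le hI hu hR hcov (by simpa using (Metric.mem_ball.1 hz).le))
    _ = _ := by
        rw [lintegral_const, Measure.restrict_apply_univ, volume_ball _ (by positivity),
          mul_mul_mul_comm, ← ENNReal.ofReal_mul' (by positivity), ← sq]
        congr 2
        ring

lemma abs_average_ball_sub_le (hI : OscBound u I r o R) (hu : Continuous u) (hR : 0 < R) {R' : ℝ}
    (hRR' : R ≤ 2 * R') {x x' : Koranyi} (hsub : Metric.ball x' R' ⊆ Metric.ball x R)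
    (hcov : Metric.closedBall x (13 * R) ⊆ ⋃ i ∈ I, Metric.ball i (r i)) :
    |(⨍ p in Metric.ball x R, u p) - ⨍ p in Metric.ball x' R', u p| * R ^ 3 ≤
      49152 * ∑ i ∈ I, o i * r i ^ 3 := by
  set δ := |(⨍ p in Metric.ball x R, u p) - ⨍ p in Metric.ball x' R', u p|
  set D := ∑ i ∈ I, o i * r i ^ 3
  have hD : 0 ≤ D := Finset.sum_nonneg fun i hi =>
    mul_nonneg (hI.nonneg i hi) (pow_nonneg (hI.pos i hi).le 3)
  have hc : 0 < unitBallVolume.toReal :=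
    ENNReal.toReal_pos unitBallVolume_pos.ne' unitBallVolume_lt_top.ne
  have real_ball (p : Koranyi) {s : ℝ} (hs : 0 ≤ s) :
      volume.real (Metric.ball p s) = s ^ 4 * unitBallVolume.toReal := by
    rw [Measure.real, volume_ball p hs, ENNReal.toReal_mul, ENNReal.toReal_ofReal (by positivity)]
  have poincare : R ^ 4 * unitBallVolume.toReal * (R' ^ 4 * unitBallVolume.toReal) * δ ≤
      3072 * R ^ 5 * D * unitBallVolume.toReal ^ 2 := by
    rw [← ENNReal.ofReal_le_ofReal_iff (by positivity),
      ENNReal.ofReal_mul (p := 3072 * R ^ 5 * D) (by positivity), ENNReal.ofReal_pow hc.le,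
      ENNReal.ofReal_toReal unitBallVolume_lt_top.ne,
      ← real_ball x hR.le, ← real_ball x' (by linarith)]
    exact (ofReal_mul_abs_setAverage_sub_le measure_ball_lt_top.ne measure_ball_lt_top.ne
      (integrableOn_ball hu x R) (integrableOn_ball hu x' R')).trans
      ((lintegral_mono fun p => lintegral_mono_set hsub).trans
        (lintegral_lintegral_sub_le hI hu hR hcov))
  have inner_le : R' ^ 4 * δ ≤ 3072 * R * D := by
    have hpos : 0 < R ^ 4 * unitBallVolume.toReal ^ 2 := by positivity
    refine le_of_mul_le_mul_left ?_ hpos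
    linarith
  refine le_of_mul_le_mul_left ?_ hR
  calc R * (δ * R ^ 3) = R ^ 4 * δ := by ring
    _ ≤ (2 * R') ^ 4 * δ := by gcongr
    _ = 16 * (R' ^ 4 * δ) := by ring
    _ ≤ 16 * (3072 * R * D) := by gcongr
    _ = R * (49152 * D) := by ring

end Poincare

end Koranyi

namespace Koranyi

/-- The constant of the Poincaré inequality `abs_average_ball_sub_le_of_sum_pow_le`, in which the
energy is measured in `ℓ⁴`. -/
def poincareConst : ℝ := 49152 * 75 ^ 3

lemma poincareConst_pos : 0 < poincareConst := by unfold poincareConst; norm_num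

lemma sum_radius_pow_le {I : Finset Koranyi} {r : Koranyi → ℝ} (hr : ∀ i ∈ I, 0 ≤ r i)
    (hd : (I : Set Koranyi).PairwiseDisjoint fun i => Metric.closedBall i (r i / 5))
    {A : Set Koranyi} {S : ℝ} (hA : volume A ≤ ENNReal.ofReal (S ^ 4) * unitBallVolume)
    (hsub : ∀ i ∈ I, Metric.closedBall i (r i / 5) ⊆ A) :
    ∑ i ∈ I, r i ^ 4 ≤ (5 * S) ^ 4 := by
  rw [mul_pow]
  refine sum_le_of_disjoint_measure volume unitBallVolume_pos.ne' unitBallVolume_lt_top.ne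
    (by norm_num) (Even.pow_nonneg (by decide) S) hd (fun _ _ => measurableSet_closedBall) hsub
    (fun i hi => pow_nonneg (hr i hi) 4) (fun i hi => ?_) hA
  rw [volume_closedBall i (div_nonneg (hr i hi) (by norm_num)), ← mul_assoc,
    ← ENNReal.ofReal_mul (by norm_num), ← mul_pow, mul_div_cancel₀ _ (by norm_num)]

section Loewner

variable {u : Koranyi → ℝ} {I : Finset Koranyi} {r o : Koranyi → ℝ} {R τ : ℝ}

open scoped Classical in
lemma abs_average_ball_sub_le_of_sum_pow_le (hu : Continuous u) (hI : OscBound u I r o R)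
    (hd : (I : Set Koranyi).PairwiseDisjoint fun i => Metric.closedBall i (r i / 5)) (hR : 0 < R)
    {R' : ℝ} (hRR' : R ≤ 2 * R') {x x' : Koranyi} (hsub : Metric.ball x' R' ⊆ Metric.ball x R)
    (hcov : Metric.closedBall x (13 * R) ⊆ ⋃ i ∈ I, Metric.ball i (r i)) (hτ : 0 ≤ τ)
    (hsum : ∑ i ∈ I with dist i x < 14 * R, o i ^ 4 ≤ τ ^ 4) :
    |(⨍ p in Metric.ball x R, u p) - ⨍ p in Metric.ball x' R', u p| ≤ poincareConst * τ := by
  set J := {i ∈ I | dist i x < 14 * R}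
  have hJI : J ⊆ I := Finset.filter_subset _ _
  have hJ := hI.mono hJI le_rfl
  have hcovJ : Metric.closedBall x (13 * R) ⊆ ⋃ i ∈ J, Metric.ball i (r i) := by
    intro p hp
    obtain ⟨i, hi, hpi⟩ := mem_iUnion₂.1 (hcov hp)
    refine mem_iUnion₂.2 ⟨i, Finset.mem_filter.2 ⟨hi, ?_⟩, hpi⟩
    rw [Metric.mem_closedBall] at hp
    rw [Metric.mem_ball'] at hpi
    linarith [hI.le i hi, dist_triangle i p x]
  have hradii : ∑ i ∈ J, r i ^ 4 ≤ (75 * R) ^ 4 := by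
    refine (sum_radius_pow_le (fun i hi => (hJ.pos i hi).le) (hd.subset hJI)
      (volume_closedBall x (by positivity : 0 ≤ 15 * R)).le
        fun i hi => Metric.closedBall_subset_closedBall' ?_).trans_eq (by ring)
    linarith [hJ.le i hi, hJ.pos i hi, (Finset.mem_filter.1 hi).2]
  refine le_of_mul_le_mul_right ?_ (pow_pos hR 3)
  calc |(⨍ p in Metric.ball x R, u p) - ⨍ p in Metric.ball x' R', u p| * R ^ 3
      ≤ 49152 * ∑ i ∈ J, o i * r i ^ 3 := abs_average_ball_sub_le hJ hu hR hRR' hsub hcovJ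
    _ ≤ 49152 * (τ * (75 * R) ^ 3) := by
        gcongr
        exact sum_mul_pow_le J 3 hJ.nonneg (fun i hi => (hJ.pos i hi).le) hτ (by positivity)
          hsum hradii
    _ = poincareConst * τ * R ^ 3 := by unfold poincareConst; ring

open scoped Classical in
lemma abs_average_ball_sub_le_of_forall_scale (hu : Continuous u) {N : ℕ}
    (hI : OscBound u I r o (R / 2 ^ N))
    (hd : (I : Set Koranyi).PairwiseDisjoint fun i => Metric.closedBall i (r i / 5)) (hR : 0 < R)
    {x : Koranyi} (hcov : Metric.closedBall x (13 * R) ⊆ ⋃ i ∈ I, Metric.ball i (r i))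
    (hτ : 0 ≤ τ) (hsum : ∀ j ≤ N, ∑ i ∈ I with dist i x < 14 * (R / 2 ^ j), o i ^ 4 ≤
      (τ * (9 / 10) ^ j) ^ 4) :
    |(⨍ p in Metric.ball x R, u p) - ⨍ p in Metric.ball x (R / 2 ^ N), u p| ≤
      10 * (poincareConst * τ) := by
  have hP := poincareConst_pos
  have hstep : ∀ j < N, |(⨍ p in Metric.ball x (R / 2 ^ j), u p) -
      ⨍ p in Metric.ball x (R / 2 ^ (j + 1)), u p| ≤ poincareConst * τ * (9 / 10) ^ j := by
    intro j hj
    have half : R / 2 ^ (j + 1) = R / 2 ^ j / 2 := by rw [pow_succ]; field_simp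
    have hRj : 0 < R / 2 ^ j := by positivity
    have hRjR : R / 2 ^ j ≤ R := div_le_self hR.le (one_le_pow₀ (by norm_num))
    rw [mul_assoc]
    refine abs_average_ball_sub_le_of_sum_pow_le hu (hI.mono subset_rfl ?_) hd hRj
      (by linarith) (Metric.ball_subset_ball (by linarith))
      ((Metric.closedBall_subset_closedBall (by linarith)).trans hcov) (by positivity)
      (hsum j hj.le)
    gcongr
    norm_num
  have htel := abs_sub_le_of_geometric (by positivity) (by norm_num) (by norm_num) hstep
  rw [pow_zero, div_one] at htel
  linarith

/-- The threshold for the energy at a suitable scale around each point of a continuum on which `u`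
vanishes; it makes the Poincaré error over all scales at most `1 / 8`. -/
def loewnerConst : ℝ := 1 / (80 * poincareConst)

lemma loewnerConst_pos : 0 < loewnerConst := by
  have := poincareConst_pos
  unfold loewnerConst
  positivity

open scoped Classical in
lemma exists_scale_le_sum_osc (hu : Continuous u) (hR : 0 < R) {N : ℕ}
    (hI : OscBound u I r o (4 * R / 2 ^ N))
    (hd : (I : Set Koranyi).PairwiseDisjoint fun i => Metric.closedBall i (r i / 5))
    {x₀ : Koranyi} (hcov : Metric.closedBall x₀ (54 * R) ⊆ ⋃ i ∈ I, Metric.ball i (r i))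
    (havg : 1 / 2 ≤ ⨍ p in Metric.ball x₀ (2 * R), u p) {x : Koranyi} (hx : dist x x₀ ≤ 2 * R)
    (hux : ∀ p ∈ Metric.ball x (4 * R / 2 ^ N), |u p| ≤ 1 / 8) :
    ∃ j : ℕ, loewnerConst ^ 4 / 2 ^ j ≤
      ∑ i ∈ I with dist i x < 14 * (4 * R / 2 ^ j), o i ^ 4 := by
  by_contra! hcon
  have hα := loewnerConst_pos
  have hPα : poincareConst * loewnerConst = 1 / 80 := by
    have := poincareConst_pos
    unfold loewnerConst
    field_simp
  have hsum (j : ℕ) : ∑ i ∈ I with dist i x < 14 * (4 * R / 2 ^ j), o i ^ 4 ≤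
      (loewnerConst * (9 / 10) ^ j) ^ 4 := by
    refine (hcon j).le.trans ?_
    rw [mul_pow, ← pow_mul, mul_comm j 4, pow_mul, div_eq_mul_inv, ← inv_pow]
    gcongr
    norm_num
  have hcovx : Metric.closedBall x (13 * (4 * R)) ⊆ ⋃ i ∈ I, Metric.ball i (r i) :=
    (Metric.closedBall_subset_closedBall' (by linarith)).trans hcov
  have hfirst := abs_average_ball_sub_le_of_sum_pow_le hu
    (hI.mono subset_rfl (div_le_self (by positivity) (one_le_pow₀ (by norm_num)))) hd
    (R' := 2 * R) (by positivity) (by linarith)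
    (Metric.ball_subset_ball' (x := x₀) (y := x) (by rw [dist_comm]; linarith)) hcovx hα.le
    (by simpa using hsum 0)
  have hscales := abs_average_ball_sub_le_of_forall_scale hu hI hd (by positivity) hcovx hα.le
    fun j _ => hsum j
  have hlast := abs_setAverage_le (μ := volume) measure_ball_lt_top (by norm_num) hux
  rw [hPα, abs_le] at hfirst hscales
  rw [abs_le] at hlast
  linarith [hfirst.1, hscales.2, hlast.2]

lemma loewnerConst_le_sum_osc (hu : Continuous u) (hR : 0 < R) {N : ℕ}
    (hI : OscBound u I r o (4 * R / 2 ^ N))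
    (hd : (I : Set Koranyi).PairwiseDisjoint fun i => Metric.closedBall i (r i / 5))
    {x₀ : Koranyi} (hcov : Metric.closedBall x₀ (54 * R) ⊆ ⋃ i ∈ I, Metric.ball i (r i))
    (havg : 1 / 2 ≤ ⨍ p in Metric.ball x₀ (2 * R), u p) {K : Set Koranyi}
    (hK : K ⊆ Metric.closedBall x₀ (2 * R))
    (huK : ∀ x ∈ K, ∀ p ∈ Metric.ball x (4 * R / 2 ^ N), |u p| ≤ 1 / 8)
    {h : Koranyi → ℝ} (hh : LipschitzWith 1 h) (hKh : Icc 0 R ⊆ h '' K) :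
    loewnerConst ^ 4 / 448 ≤ ∑ i ∈ I, o i ^ 4 := by
  classical
  have hα := loewnerConst_pos
  choose! j hj using fun x hx => exists_scale_le_sum_osc hu hR hI hd hcov havg (hK hx) (huK x hx)
  have hdens := mul_length_le_sum_of_density (I := I) (w := fun i => o i ^ 4) (K := K)
    (ρ := fun x => 14 * (4 * R / 2 ^ j x)) (B := 14 * (4 * R)) (c := loewnerConst ^ 4 / (56 * R))
    (fun i hi => pow_nonneg (hI.nonneg i hi) 4) (by positivity) (fun x _ => by positivity)
    (fun x _ => ?_) (fun x hx => ?_) hh hKh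
  · calc loewnerConst ^ 4 / 448 = loewnerConst ^ 4 / (56 * R) * (R - 0) / 8 := by
          field_simp
          ring
      _ ≤ ∑ i ∈ I, o i ^ 4 := by linarith
  · gcongr
    exact div_le_self (by positivity) (one_le_pow₀ (by norm_num))
  · refine le_of_eq_of_le ?_ (hj x hx)
    field_simp
    norm_num

lemma exists_scale_loewnerConst_le_sum_osc (hu : Continuous u) (hR : 0 < R) {x₀ : Koranyi}
    {h₀ h₁ : Koranyi → ℝ} (hh₀ : LipschitzWith 1 h₀) (hh₁ : LipschitzWith 1 h₁)
    (hu₀ : Icc 0 R ⊆ h₀ '' {p ∈ Metric.closedBall x₀ (2 * R) | u p = 0})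
    (hu₁ : Icc 0 R ⊆ h₁ '' {p ∈ Metric.closedBall x₀ (2 * R) | u p = 1}) :
    ∃ η > 0, ∀ (I : Finset Koranyi) (r o : Koranyi → ℝ), OscBound u I r o η →
      ((I : Set Koranyi).PairwiseDisjoint fun i => Metric.closedBall i (r i / 5)) →
      Metric.closedBall x₀ (54 * R) ⊆ ⋃ i ∈ I, Metric.ball i (r i) →
      loewnerConst ^ 4 / 448 ≤ ∑ i ∈ I, o i ^ 4 := by
  obtain ⟨δ, hδ, hmod⟩ := exists_forall_dist_lt hu (isCompact_closedBall x₀ (2 * R))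
    (by norm_num : (0 : ℝ) < 1 / 8)
  obtain ⟨N, hN⟩ : ∃ N : ℕ, 4 * R / 2 ^ N < δ := by
    obtain ⟨N, hN⟩ := pow_unbounded_of_one_lt (4 * R / δ) (by norm_num : (1 : ℝ) < 2)
    exact ⟨N, by rwa [div_lt_comm₀ (by positivity) hδ]⟩
  have near {x p : Koranyi} (hx : x ∈ Metric.closedBall x₀ (2 * R))
      (hp : p ∈ Metric.ball x (4 * R / 2 ^ N)) : |u x - u p| ≤ 1 / 8 :=
    (hmod x hx p ((Metric.mem_ball'.1 hp).trans hN)).le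
  refine ⟨4 * R / 2 ^ N, by positivity, fun I r o hI hd hcov => ?_⟩
  rcases le_total (1 / 2) (⨍ p in Metric.ball x₀ (2 * R), u p) with havg | havg
  · refine loewnerConst_le_sum_osc hu hR hI hd hcov havg (fun x hx => hx.1)
      (fun x hx p hp => ?_) hh₀ hu₀
    simpa [hx.2] using near hx.1 hp
  · have hI' : OscBound (fun p => 1 - u p) I r o (4 * R / 2 ^ N) :=
      ⟨hI.pos, hI.le, hI.nonneg, fun i hi p hp q hq => by
        simpa only [sub_sub_sub_cancel_left] using hI.osc i hi q hq p hp⟩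
    have havg' : 1 / 2 ≤ ⨍ p in Metric.ball x₀ (2 * R), (1 - u p) := by
      rw [setAverage_const_sub (Metric.measure_ball_pos _ _ (by positivity)).ne'
        measure_ball_lt_top.ne (integrableOn_ball hu _ _)]
      linarith
    refine loewnerConst_le_sum_osc (by fun_prop) hR hI' hd hcov havg' (fun x hx => hx.1)
      (fun x hx p hp => ?_) hh₁ hu₁
    simpa [hx.2] using near hx.1 hp

end Loewner

end Koranyi

section LogCutoff

lemma abs_log_sub_log_le {a b c : ℝ} (hc : 0 < c) (ha : c ≤ a) (hb : c ≤ b) :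
    |Real.log a - Real.log b| ≤ |a - b| / c := by
  wlog hab : b ≤ a generalizing a b
  · rw [abs_sub_comm, abs_sub_comm a]
    exact this hb ha (le_of_not_ge hab)
  have hb0 := hc.trans_le hb
  have ha0 := hc.trans_le ha
  rw [abs_of_nonneg (sub_nonneg.2 (Real.log_le_log hb0 hab)), abs_of_nonneg (sub_nonneg.2 hab),
    ← Real.log_div ha0.ne' hb0.ne']
  calc Real.log (a / b) ≤ a / b - 1 := Real.log_le_sub_one_of_pos (by positivity)
    _ = (a - b) / b := by field_simp
    _ ≤ (a - b) / c := div_le_div_of_nonneg_left (sub_nonneg.2 hab) hc hb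

/-- The number `s` clamped to the interval `[l, 2 ^ n * l]`. -/
def dyadicClamp (l : ℝ) (n : ℕ) (s : ℝ) : ℝ := max l (min (2 ^ n * l) s)

/-- The function of the distance which is `0` up to `l`, `1` from `2 ^ n * l` on, and affine in
`log s` in between. Its energy in a ring of conformal dimension `4` is small when `n` is large. -/
def logCutoff (l : ℝ) (n : ℕ) (s : ℝ) : ℝ :=
  (Real.log (dyadicClamp l n s) - Real.log l) / (n * Real.log 2)

/-- A bound for the oscillation of `logCutoff l n` on `[s - L, s + L]`, where `L ≤ l / 4`. -/
def logCutoffOsc (l : ℝ) (n : ℕ) (L s : ℝ) : ℝ :=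
  if s ≤ 2 ^ (n + 1) * l then 4 * L / (n * Real.log 2 * dyadicClamp l n s) else 0

variable {l L s t t' : ℝ} {n : ℕ}

lemma le_dyadicClamp : l ≤ dyadicClamp l n s := le_max_left _ _

lemma abs_dyadicClamp_sub_le : |dyadicClamp l n s - dyadicClamp l n t| ≤ |s - t| :=
  (abs_max_sub_max_le_max _ _ _ _).trans (max_le (by simp)
    ((abs_min_sub_min_le_max _ _ _ _).trans (max_le (by simp) le_rfl)))

lemma continuous_logCutoff (hl : 0 < l) : Continuous (logCutoff l n) := by
  have h : Continuous (dyadicClamp l n) := by unfold dyadicClamp; fun_prop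
  exact ((h.log fun s => (hl.trans_le le_dyadicClamp).ne').sub continuous_const).div_const _

lemma logCutoff_of_le (h : s ≤ l) : logCutoff l n s = 0 := by
  have : dyadicClamp l n s = l := max_eq_left ((min_le_right _ _).trans h)
  simp [logCutoff, this]

lemma logCutoff_of_ge (hl : 0 < l) (hn : n ≠ 0) (h : 2 ^ n * l ≤ s) : logCutoff l n s = 1 := by
  have := Real.log_pos (by norm_num : (1 : ℝ) < 2)
  have hclamp : dyadicClamp l n s = 2 ^ n * l := by
    unfold dyadicClamp
    rw [min_eq_left h, max_eq_right (le_mul_of_one_le_left hl.le (one_le_pow₀ (by norm_num)))]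
  unfold logCutoff
  rw [hclamp, Real.log_mul (by positivity) hl.ne', Real.log_pow, add_sub_cancel_right,
    div_self (by positivity)]

lemma logCutoffOsc_nonneg (hl : 0 < l) (hL : 0 ≤ L) : 0 ≤ logCutoffOsc l n L s := by
  have := hl.trans_le (le_dyadicClamp (n := n) (s := s))
  have := Real.log_pos (by norm_num : (1 : ℝ) < 2)
  unfold logCutoffOsc
  split_ifs <;> positivity

lemma abs_logCutoff_sub_le (hl : 0 < l) (hn : n ≠ 0) (hL : L ≤ l / 4) (ht : |s - t| ≤ L)
    (ht' : |s - t'| ≤ L) : |logCutoff l n t - logCutoff l n t'| ≤ logCutoffOsc l n L s := by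
  have := Real.log_pos (by norm_num : (1 : ℝ) < 2)
  unfold logCutoffOsc
  split_ifs with hs
  · set e := dyadicClamp l n s
    have he : l ≤ e := le_dyadicClamp
    have half_le {t : ℝ} (ht : |s - t| ≤ L) : e / 2 ≤ dyadicClamp l n t := by
      linarith [(abs_le.1 (abs_dyadicClamp_sub_le.trans ht : |e - dyadicClamp l n t| ≤ L)).2]
    have htt' : |t - t'| ≤ 2 * L := by linarith [abs_sub_le t s t', abs_sub_comm s t]
    have hlogs : |Real.log (dyadicClamp l n t) - Real.log (dyadicClamp l n t')| ≤ 4 * L / e := by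
      refine (abs_log_sub_log_le (by linarith) (half_le ht) (half_le ht')).trans ?_
      rw [div_le_div_iff₀ (by linarith) (by linarith)]
      nlinarith [(abs_dyadicClamp_sub_le (l := l) (n := n)).trans htt']
    rw [logCutoff, logCutoff, ← sub_div, sub_sub_sub_cancel_right, abs_div,
      abs_of_pos (by positivity : 0 < n * Real.log 2), mul_comm (n * Real.log 2) e,
      ← div_div (4 * L) e]
    gcongr
  · have far {t : ℝ} (ht : |s - t| ≤ L) : 2 ^ n * l ≤ t := by
      have h1 : l ≤ 2 ^ n * l := le_mul_of_one_le_left hl.le (one_le_pow₀ (by norm_num))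
      rw [pow_succ] at hs
      linarith [(abs_le.1 ht).2]
    rw [logCutoff_of_ge hl hn (far ht), logCutoff_of_ge hl hn (far ht'), sub_self, abs_zero]

lemma inv_dyadicClamp_pow_le (hl : 0 < l) (m : ℕ) (hs : s ≤ 2 ^ (n + 1) * l) :
    (dyadicClamp l n s ^ m)⁻¹ ≤ ∑ k ∈ Finset.range (n + 1),
      if s ≤ 2 ^ (k + 1) * l then 2 ^ m * ((2 ^ k * l) ^ m)⁻¹ else 0 := by
  classical
  have hex : ∃ k, s ≤ 2 ^ (k + 1) * l := ⟨n, hs⟩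
  set k := Nat.find hex
  have hkn : k ≤ n := Nat.find_min' hex hs
  have hks : s ≤ 2 ^ (k + 1) * l := Nat.find_spec hex
  have hhalf : 2 ^ k * l / 2 ≤ dyadicClamp l n s := by
    rcases Nat.eq_zero_or_pos k with h0 | h0
    · rw [h0, pow_zero, one_mul]
      exact (half_le_self hl.le).trans le_dyadicClamp
    · have hlt : 2 ^ k * l < s := by
        have := Nat.find_min hex (m := k - 1) (by lia)
        rwa [Nat.sub_add_cancel h0, not_le] at this
      have hpow : 2 ^ k * l ≤ 2 ^ n * l := by gcongr; norm_num
      have hpos : 0 < 2 ^ k * l := by positivity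
      exact (le_min (by linarith) (by linarith)).trans (le_max_right _ _)
  refine le_trans ?_ (Finset.single_le_sum (f := fun k =>
    if s ≤ 2 ^ (k + 1) * l then 2 ^ m * ((2 ^ k * l) ^ m)⁻¹ else 0)
    (fun j _ => by split_ifs <;> positivity) (Finset.mem_range.2 (Nat.lt_succ_of_le hkn)))
  simp only [hks, if_true]
  calc (dyadicClamp l n s ^ m)⁻¹ ≤ ((2 ^ k * l / 2) ^ m)⁻¹ := by gcongr
    _ = 2 ^ m * ((2 ^ k * l) ^ m)⁻¹ := by rw [div_pow, inv_div, div_eq_mul_inv]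

lemma sum_mul_inv_dyadicClamp_pow_le {ι : Type*} {I : Finset ι} {D g : ι → ℝ} {A : ℝ} {m : ℕ}
    (hl : 0 < l) (hg : ∀ i ∈ I, 0 ≤ g i)
    (hshell : ∀ k ≤ n, ∑ i ∈ I with D i ≤ 2 ^ (k + 1) * l, g i ≤ A * (2 ^ k * l) ^ m) :
    ∑ i ∈ I with D i ≤ 2 ^ (n + 1) * l, g i * (dyadicClamp l n (D i) ^ m)⁻¹ ≤
      2 ^ m * A * (n + 1) := by
  set a : ι → ℕ → ℝ := fun i k =>
    if D i ≤ 2 ^ (k + 1) * l then 2 ^ m * ((2 ^ k * l) ^ m)⁻¹ else 0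
  have ha (i : ι) (k : ℕ) : 0 ≤ a i k := by simp only [a]; split_ifs <;> positivity
  calc ∑ i ∈ I with D i ≤ 2 ^ (n + 1) * l, g i * (dyadicClamp l n (D i) ^ m)⁻¹
      ≤ ∑ i ∈ I with D i ≤ 2 ^ (n + 1) * l, g i * ∑ k ∈ Finset.range (n + 1), a i k :=
        Finset.sum_le_sum fun i hi => mul_le_mul_of_nonneg_left
          (inv_dyadicClamp_pow_le hl m (Finset.mem_filter.1 hi).2)
          (hg i (Finset.mem_filter.1 hi).1)
    _ ≤ ∑ i ∈ I, g i * ∑ k ∈ Finset.range (n + 1), a i k :=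
        Finset.sum_le_sum_of_subset_of_nonneg (Finset.filter_subset _ _) fun i hi _ =>
          mul_nonneg (hg i hi) (Finset.sum_nonneg fun k _ => ha i k)
    _ = ∑ k ∈ Finset.range (n + 1), 2 ^ m * ((2 ^ k * l) ^ m)⁻¹ *
          ∑ i ∈ I with D i ≤ 2 ^ (k + 1) * l, g i := by
        simp only [Finset.mul_sum, a]
        rw [Finset.sum_comm]
        refine Finset.sum_congr rfl fun k _ => ?_
        rw [Finset.sum_filter]
        refine Finset.sum_congr rfl fun i _ => ?_
        split_ifs <;> ring
    _ ≤ ∑ k ∈ Finset.range (n + 1), 2 ^ m * A := by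
        refine Finset.sum_le_sum fun k hk => ?_
        refine (mul_le_mul_of_nonneg_left (hshell k (Finset.mem_range_succ_iff.1 hk))
          (by positivity)).trans_eq ?_
        field_simp
    _ = 2 ^ m * A * (n + 1) := by
        rw [Finset.sum_const, Finset.card_range, nsmul_eq_mul]
        push_cast
        ring

lemma logCutoffOsc_pow_le {L s g h : ℝ} (hl : 0 < l) (hn : n ≠ 0) (hh : 0 ≤ h)
    (hL : L ^ 4 ≤ g + h) (hs : s ≤ 2 ^ (n + 1) * l) :
    logCutoffOsc l n L s ^ 4 ≤ (8 / n) ^ 4 * (g * (dyadicClamp l n s ^ 4)⁻¹ + h / l ^ 4) := by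
  have hlog : 1 / 2 ≤ Real.log 2 := by linarith [Real.log_two_gt_d9]
  have hle : l ≤ dyadicClamp l n s := le_dyadicClamp
  have hpos : 0 < dyadicClamp l n s := hl.trans_le hle
  have hconst : 4 / (n * Real.log 2) ≤ 8 / n := by
    rw [div_le_div_iff₀ (by positivity) (by positivity)]
    nlinarith [(by positivity : (0 : ℝ) < n)]
  calc logCutoffOsc l n L s ^ 4
      = (4 / (n * Real.log 2)) ^ 4 * (L ^ 4 * (dyadicClamp l n s ^ 4)⁻¹) := by
        rw [logCutoffOsc, if_pos hs, div_pow, div_pow, mul_pow, mul_pow, ← div_eq_mul_inv,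
          div_mul_div_comm]
    _ ≤ (8 / n) ^ 4 * ((g + h) * (dyadicClamp l n s ^ 4)⁻¹) := by gcongr
    _ ≤ (8 / n) ^ 4 * (g * (dyadicClamp l n s ^ 4)⁻¹ + h / l ^ 4) := by
        rw [add_mul, ← div_eq_mul_inv h]
        gcongr

lemma sum_logCutoffOsc_pow_le {ι : Type*} {I : Finset ι} {D L g h : ι → ℝ} {A E : ℝ} (hl : 0 < l)
    (hn : n ≠ 0) (hg : ∀ i ∈ I, 0 ≤ g i) (hh : ∀ i ∈ I, 0 ≤ h i)
    (hL : ∀ i ∈ I, L i ^ 4 ≤ g i + h i)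
    (hshell : ∀ k ≤ n, ∑ i ∈ I with D i ≤ 2 ^ (k + 1) * l, g i ≤ A * (2 ^ k * l) ^ 4)
    (hE : ∑ i ∈ I, h i ≤ E) :
    ∑ i ∈ I, logCutoffOsc l n (L i) (D i) ^ 4 ≤ 131072 * A / n + 4096 * E / l ^ 4 := by
  have hn' : (1 : ℝ) ≤ n := by exact_mod_cast Nat.one_le_iff_ne_zero.2 hn
  have hA : 0 ≤ A := by
    refine nonneg_of_mul_nonneg_left ?_ (by positivity : 0 < (2 ^ 0 * l) ^ 4)
    exact (Finset.sum_nonneg fun i hi => hg i (Finset.mem_filter.1 hi).1).trans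
      (hshell 0 n.zero_le)
  have hE0 : 0 ≤ E := (Finset.sum_nonneg hh).trans hE
  calc ∑ i ∈ I, logCutoffOsc l n (L i) (D i) ^ 4
      = ∑ i ∈ I with D i ≤ 2 ^ (n + 1) * l, logCutoffOsc l n (L i) (D i) ^ 4 := by
        refine (Finset.sum_filter_of_ne fun i _ hi => ?_).symm
        by_contra hD
        exact hi (by rw [logCutoffOsc, if_neg hD, zero_pow four_ne_zero])
    _ ≤ (8 / n) ^ 4 * ((∑ i ∈ I with D i ≤ 2 ^ (n + 1) * l,
          g i * (dyadicClamp l n (D i) ^ 4)⁻¹) +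
            (∑ i ∈ I with D i ≤ 2 ^ (n + 1) * l, h i) / l ^ 4) := by
        rw [Finset.sum_div, ← Finset.sum_add_distrib, Finset.mul_sum]
        refine Finset.sum_le_sum fun i hi => ?_
        obtain ⟨hi, hD⟩ := Finset.mem_filter.1 hi
        exact logCutoffOsc_pow_le hl hn (hh i hi) (hL i hi) hD
    _ ≤ (8 / n) ^ 4 * (2 ^ 4 * A * (n + 1) + E / l ^ 4) := by
        gcongr
        · exact sum_mul_inv_dyadicClamp_pow_le hl hg hshell
        · exact (Finset.sum_le_sum_of_subset_of_nonneg (Finset.filter_subset _ _)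
            fun i hi _ => hh i hi).trans hE
    _ ≤ (8 / n) ^ 4 * (2 ^ 4 * A * (n + n)) + (8 / 1) ^ 4 * (E / l ^ 4) := by
        rw [mul_add]
        gcongr
    _ = 131072 * A / n * (1 / n) ^ 2 + 4096 * E / l ^ 4 := by
        field_simp
        ring
    _ ≤ 131072 * A / n + 4096 * E / l ^ 4 := by
        gcongr
        exact mul_le_of_le_one_right (by positivity)
          (pow_le_one₀ (by positivity) ((div_le_one (by positivity)).2 hn'))

end LogCutoff

lemma exists_le_mul_of_decay {φ : ℝ → ℝ} {a b r₀ ε : ℝ} (ha : 1 ≤ a) (hab : a < b) (hr₀ : 0 < r₀)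
    (hε : 0 < ε) (hφ : ∀ r ∈ Ioc 0 r₀, b * φ (r / a) ≤ φ r) : ∃ r ∈ Ioc 0 r₀, φ r ≤ ε * r := by
  have ha0 : 0 < a := one_pos.trans_le ha
  have hb : 0 < b := ha0.trans hab
  have hmem (k : ℕ) : r₀ / a ^ k ∈ Ioc 0 r₀ :=
    ⟨by positivity, div_le_self hr₀.le (one_le_pow₀ ha)⟩
  have hiter (k : ℕ) : b ^ k * φ (r₀ / a ^ k) ≤ φ r₀ := by
    induction k with
    | zero => simp
    | succ k ih =>
      calc b ^ (k + 1) * φ (r₀ / a ^ (k + 1)) = b ^ k * (b * φ (r₀ / a ^ k / a)) := by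
            rw [div_div, ← pow_succ, pow_succ b, mul_assoc]
        _ ≤ b ^ k * φ (r₀ / a ^ k) := by gcongr; exact hφ _ (hmem k)
        _ ≤ φ r₀ := ih
  obtain ⟨k, hk⟩ := exists_pow_lt_of_lt_one (by positivity : 0 < ε * r₀ / (|φ r₀| + 1))
    ((div_lt_one hb).2 hab)
  refine ⟨r₀ / a ^ k, hmem k, ?_⟩
  refine le_of_mul_le_mul_left ((hiter k).trans ?_) (pow_pos hb k)
  rw [div_pow, div_lt_div_iff₀ (by positivity) (by positivity)] at hk
  calc φ r₀ ≤ |φ r₀| + 1 := (le_abs_self _).trans (le_add_of_nonneg_right zero_le_one)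
    _ ≤ ε * r₀ * b ^ k / a ^ k := by rw [le_div_iff₀ (by positivity)]; linarith
    _ = b ^ k * (ε * (r₀ / a ^ k)) := by ring

section Outer

variable {X Y : Type*} [PseudoMetricSpace X] [PseudoMetricSpace Y] {f : X → Y} {M r s : ℝ}
  {x q : X}

/-- The outer radius of the image of the closed ball of radius `r` about `x`, seen from `f x`. -/
def outer (f : X → Y) (x : X) (r : ℝ) : ℝ :=
  sSup ((fun q => dist (f x) (f q)) '' Metric.closedBall x r)

/-- `f` distorts the sphere of radius `r` about `x` by a factor of at most `M`. -/
def RoundAt (f : X → Y) (M : ℝ) (x : X) (r : ℝ) : Prop :=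
  ∀ q q', dist x q ≤ r → r ≤ dist x q' → dist (f x) (f q) ≤ M * dist (f x) (f q')

lemma outer_nonneg : 0 ≤ outer f x r :=
  Real.sSup_nonneg (by rintro _ ⟨q, -, rfl⟩; exact dist_nonneg)

variable [ProperSpace X]

lemma dist_le_outer (hf : Continuous f) (h : dist x q ≤ r) : dist (f x) (f q) ≤ outer f x r :=
  le_csSup ((isCompact_closedBall x r).image (continuous_const.dist hf)).bddAbove
    (mem_image_of_mem _ (Metric.mem_closedBall'.2 h))

lemma exists_dist_eq_outer (hf : Continuous f) (x : X) (hr : 0 ≤ r) :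
    ∃ q, dist x q ≤ r ∧ dist (f x) (f q) = outer f x r := by
  obtain ⟨q, hq, e⟩ := ((isCompact_closedBall x r).image (continuous_const.dist hf)).sSup_mem
    ((Metric.nonempty_closedBall.2 hr).image _)
  exact ⟨q, Metric.mem_closedBall'.1 hq, e⟩

lemma RoundAt.ball_subset {f : X ≃ₜ Y} (h : RoundAt f M x r) (hM : 0 < M) (hr : 0 ≤ r) :
    Metric.ball (f x) (outer f x r / M) ⊆ f '' Metric.ball x r := by
  intro y hy
  refine ⟨f.symm y, ?_, f.apply_symm_apply y⟩
  by_contra hfar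
  obtain ⟨q, hq, e⟩ := exists_dist_eq_outer f.continuous x hr
  have := h q (f.symm y) hq (not_lt.1 fun hlt => hfar (Metric.mem_ball'.2 hlt))
  rw [e, f.apply_symm_apply] at this
  rw [Metric.mem_ball', lt_div_iff₀ hM] at hy
  linarith

end Outer

namespace Koranyi

variable {f : Koranyi ≃ₜ Koranyi} {M : ℝ} {x : Koranyi}

lemma sum_le_of_image_closedBall_subset {I : Finset Koranyi} {ρ a : Koranyi → ℝ} {A : Set Koranyi}
    {C V : ℝ} (hd : (I : Set Koranyi).PairwiseDisjoint fun i => Metric.closedBall i (ρ i))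
    (hC : 0 ≤ C) (hV : 0 ≤ V) (hsub : ∀ i ∈ I, f '' Metric.closedBall i (ρ i) ⊆ A)
    (ha : ∀ i ∈ I, 0 ≤ a i) (haf : ∀ i ∈ I, ENNReal.ofReal (a i) * unitBallVolume ≤
      ENNReal.ofReal C * volume (f '' Metric.closedBall i (ρ i)))
    (hA : volume A ≤ ENNReal.ofReal V * unitBallVolume) : ∑ i ∈ I, a i ≤ C * V :=
  sum_le_of_disjoint_measure volume unitBallVolume_pos.ne' unitBallVolume_lt_top.ne hC hV
    (fun _ hi _ hj hij => (disjoint_image_iff f.injective).2 (hd hi hj hij))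
    (fun _ _ => (f.isClosedMap _ Metric.isClosed_closedBall).measurableSet) hsub ha haf hA

lemma ofReal_outer_pow_le {r : ℝ} (h : RoundAt f M x r) (hM : 0 < M) (hr : 0 ≤ r) :
    ENNReal.ofReal ((outer f x r / M) ^ 4) * unitBallVolume ≤
      volume (f '' Metric.closedBall x r) := by
  rw [← volume_ball (f x) (div_nonneg outer_nonneg hM.le)]
  exact measure_mono ((h.ball_subset hM hr).trans (image_mono Metric.ball_subset_closedBall))

lemma exists_radius_outer_le (hM : 0 < M) (hf : ∀ᶠ r in 𝓝[>] (0 : ℝ), RoundAt f M x r) {δ ε : ℝ}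
    (hδ : 0 < δ) (hε : 0 < ε) :
    ∃ r ∈ Ioo 0 δ, ENNReal.ofReal (outer f x r ^ 4) * unitBallVolume ≤
      ENNReal.ofReal ((10 * M) ^ 4) * volume (f '' Metric.closedBall x (r / 5)) ∨
      outer f x r ≤ ε * r := by
  obtain ⟨r₀, hr₀, hround⟩ :=
    mem_nhdsGT_iff_exists_Ioc_subset.1 (hf.and (Ioo_mem_nhdsGT hδ))
  by_contra! hbad
  suffices hdecay : ∀ r ∈ Ioc 0 r₀, 10 * outer f x (r / 5) ≤ outer f x r by
    obtain ⟨r, hr, hle⟩ :=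
      exists_le_mul_of_decay (by norm_num) (by norm_num : (5 : ℝ) < 10) hr₀ hε hdecay
    exact hle.not_gt (hbad r (hround hr).2).2
  intro r hr
  have hr5 : r / 5 ∈ Ioc 0 r₀ := ⟨div_pos hr.1 (by norm_num), by linarith [hr.1, hr.2]⟩
  have hpow : ENNReal.ofReal ((10 * outer f x (r / 5)) ^ 4) * unitBallVolume ≤
      ENNReal.ofReal (outer f x r ^ 4) * unitBallVolume := by
    refine le_trans (le_of_eq ?_) ((mul_le_mul_right
      (ofReal_outer_pow_le (hround hr5).1 hM hr5.1.le) _).trans (hbad r (hround hr).2).1.le)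
    rw [← mul_assoc, ← ENNReal.ofReal_mul (by positivity), ← mul_pow]
    congr 3
    field_simp
  rw [ENNReal.mul_le_mul_iff_left unitBallVolume_pos.ne' unitBallVolume_lt_top.ne,
    ENNReal.ofReal_le_ofReal_iff (pow_nonneg outer_nonneg 4)] at hpow
  exact le_of_pow_le_pow_left₀ (by norm_num) outer_nonneg hpow

lemma exists_cover_outer_le (hM : 0 < M) (hf : ∀ x, ∀ᶠ r in 𝓝[>] (0 : ℝ), RoundAt f M x r)
    (x : Koranyi) (S : ℝ) {δ η ε : ℝ} (hδ : 0 < δ) (hη : 0 < η) (hε : 0 < ε) :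
    ∃ (I : Finset Koranyi) (r : Koranyi → ℝ), (I : Set Koranyi) ⊆ Metric.closedBall x S ∧
      ((I : Set Koranyi).PairwiseDisjoint fun i => Metric.closedBall i (r i / 5)) ∧
      Metric.closedBall x S ⊆ (⋃ i ∈ I, Metric.ball i (r i)) ∧
      ∀ i ∈ I, r i ∈ Ioc 0 η ∧ outer f i (r i) ≤ δ ∧
        (ENNReal.ofReal (outer f i (r i) ^ 4) * unitBallVolume ≤
          ENNReal.ofReal ((10 * M) ^ 4) * volume (f '' Metric.closedBall i (r i / 5)) ∨
        outer f i (r i) ≤ ε * r i) := by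
  have hK := isCompact_closedBall x S
  obtain ⟨τ, hτ, hmod⟩ := exists_forall_dist_lt f.continuous hK hδ
  choose r hr hgood using fun i => exists_radius_outer_le hM (hf i) (lt_min hτ hη) hε
  obtain ⟨I, hIK, hd, hcov⟩ := exists_finset_cover hK r fun i => (hr i).1
  refine ⟨I, r, hIK, hd, hcov, fun i hi => ⟨⟨(hr i).1, ?_⟩, ?_, hgood i⟩⟩
  · exact (hr i).2.le.trans (min_le_right _ _)
  · obtain ⟨q, hq, e⟩ := exists_dist_eq_outer f.continuous i (hr i).1.le
    rw [← e]
    exact (hmod i (hIK hi) q (hq.trans_lt ((hr i).2.trans_le (min_le_left _ _)))).le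

lemma oscBound_logCutoff {I : Finset Koranyi} {r : Koranyi → ℝ} {l η : ℝ} {n : ℕ} (hl : 0 < l)
    (hn : n ≠ 0) (hr : ∀ i ∈ I, r i ∈ Ioc 0 η) (hL : ∀ i ∈ I, outer f i (r i) ≤ l / 4) :
    OscBound (fun p => logCutoff l n (dist (f x) (f p))) I r
      (fun i => logCutoffOsc l n (outer f i (r i)) (dist (f x) (f i))) η where
  pos i hi := (hr i hi).1
  le i hi := (hr i hi).2
  nonneg _ _ := logCutoffOsc_nonneg hl outer_nonneg
  osc i hi p hp q hq := by
    have near {p : Koranyi} (hp : p ∈ Metric.ball i (r i)) :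
        |dist (f x) (f i) - dist (f x) (f p)| ≤ outer f i (r i) := by
      rw [dist_comm (f x), dist_comm (f x)]
      exact (abs_dist_sub_le _ _ _).trans
        (dist_le_outer f.continuous (Metric.mem_ball'.1 hp).le)
    exact abs_logCutoff_sub_le hl hn (hL i hi) (near hp) (near hq)

open scoped Classical in
lemma sum_ite_outer_pow_le {I : Finset Koranyi} {r : Koranyi → ℝ} {l s ε : ℝ}
    (hl : 0 < l) (hls : l ≤ s)
    (hd : (I : Set Koranyi).PairwiseDisjoint fun i => Metric.closedBall i (r i / 5))
    (hr : ∀ i ∈ I, 0 < r i) (hL : ∀ i ∈ I, outer f i (r i) ≤ l / 4)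
    (hI : ∀ i ∈ I, ENNReal.ofReal (outer f i (r i) ^ 4) * unitBallVolume ≤
      ENNReal.ofReal ((10 * M) ^ 4) * volume (f '' Metric.closedBall i (r i / 5)) ∨
        outer f i (r i) ≤ ε * r i) :
    ∑ i ∈ I with dist (f x) (f i) ≤ 2 * s,
      (if outer f i (r i) ≤ ε * r i then 0 else outer f i (r i) ^ 4) ≤
        (10 * M) ^ 4 * 3 ^ 4 * s ^ 4 := by
  rw [mul_assoc, ← mul_pow]
  refine sum_le_of_image_closedBall_subset (f := f)
    (hd.subset (Finset.coe_subset.2 (Finset.filter_subset _ _)))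
    (Even.pow_nonneg (by decide) _) (Even.pow_nonneg (by decide) _) ?_ (fun i _ => ?_)
    (fun i hi => ?_) (volume_ball (f x) (by linarith : 0 ≤ 3 * s)).le
  · rintro i hi _ ⟨p, hp, rfl⟩
    obtain ⟨hiI, hdist⟩ := Finset.mem_filter.1 hi
    have hip : dist (f i) (f p) ≤ outer f i (r i) := dist_le_outer f.continuous
      ((Metric.mem_closedBall'.1 hp).trans (by linarith [hr i hiI]))
    rw [Metric.mem_ball']
    linarith [hL i hiI, dist_triangle (f x) (f i) (f p)]
  · split_ifs
    exacts [le_rfl, pow_nonneg outer_nonneg 4]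
  · split_ifs with h
    · simp
    · exact (hI i (Finset.mem_filter.1 hi).1).resolve_right h

lemma exists_oscBound_logCutoff_sum_lt (hM : 0 < M)
    (hf : ∀ x, ∀ᶠ r in 𝓝[>] (0 : ℝ), RoundAt f M x r) {κ : ℝ} (hκ : 0 < κ) :
    ∃ n ≠ 0, ∀ (x : Koranyi) {l S η : ℝ}, 0 < l → 0 < S → 0 < η →
      ∃ (I : Finset Koranyi) (r o : Koranyi → ℝ),
        OscBound (fun p => logCutoff l n (dist (f x) (f p))) I r o η ∧
        ((I : Set Koranyi).PairwiseDisjoint fun i => Metric.closedBall i (r i / 5)) ∧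
        Metric.closedBall x S ⊆ (⋃ i ∈ I, Metric.ball i (r i)) ∧ ∑ i ∈ I, o i ^ 4 < κ := by
  classical
  set A : ℝ := (10 * M) ^ 4 * 3 ^ 4
  obtain ⟨n, hn⟩ := exists_nat_gt (131072 * A / (κ / 2))
  have hn0 : (0 : ℝ) < n := lt_of_le_of_lt (by positivity) hn
  have hnκ : 131072 * A / n < κ / 2 := (div_lt_comm₀ (by positivity) hn0).1 hn
  have hn0 : n ≠ 0 := by exact_mod_cast hn0.ne'
  refine ⟨n, hn0, fun x l S η hl hS hη => ?_⟩
  obtain ⟨ε, hεκ, hε⟩ :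
      ∃ ε : ℝ, 4096 * (ε ^ 4 * (5 ^ 4 * (S + η) ^ 4)) / l ^ 4 < κ / 2 ∧ 0 < ε := by
    have hlim : Tendsto (fun ε : ℝ => 4096 * (ε ^ 4 * (5 ^ 4 * (S + η) ^ 4)) / l ^ 4) (𝓝[>] 0)
        (𝓝 0) := (Continuous.tendsto' (by fun_prop) _ _ (by simp)).mono_left nhdsWithin_le_nhds
    exact ((hlim.eventually_lt_const (half_pos hκ)).and self_mem_nhdsWithin).exists
  obtain ⟨I, r, hIS, hd, hcov, hI⟩ :=
    exists_cover_outer_le hM hf x S (by positivity : 0 < l / 4) hη hε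
  have hL : ∀ i ∈ I, outer f i (r i) ≤ l / 4 := fun i hi => (hI i hi).2.1
  refine ⟨I, r, _, oscBound_logCutoff hl hn0 (fun i hi => (hI i hi).1) hL, hd, hcov, ?_⟩
  set g : Koranyi → ℝ := fun i =>
    if outer f i (r i) ≤ ε * r i then 0 else outer f i (r i) ^ 4
  have hg (i : Koranyi) : 0 ≤ g i := by
    simp only [g]; split_ifs; exacts [le_rfl, pow_nonneg outer_nonneg 4]
  refine (sum_logCutoffOsc_pow_le (g := g) (h := fun i => (ε * r i) ^ 4) hl hn0 (fun i _ => hg i)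
    (fun i _ => by positivity) (fun i _ => ?_) (fun k _ => ?_) ?_).trans_lt
      ((add_lt_add hnκ hεκ).trans_eq (add_halves κ))
  · simp only [g]
    split_ifs with h
    · rw [zero_add]; exact pow_le_pow_left₀ outer_nonneg h 4
    · exact le_add_of_nonneg_right (by positivity)
  · have hshell := sum_ite_outer_pow_le (M := M) (x := x) hl
      (le_mul_of_one_le_left hl.le (one_le_pow₀ one_le_two : (1 : ℝ) ≤ 2 ^ k)) hd
      (fun i hi => (hI i hi).1.1) hL fun i hi => (hI i hi).2.2
    rwa [← mul_assoc, ← pow_succ'] at hshell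
  · simp only [mul_pow, ← Finset.mul_sum]
    gcongr
    rw [← mul_pow]
    refine sum_radius_pow_le (fun i hi => (hI i hi).1.1.le) hd
      (volume_closedBall x (by positivity)).le
        fun i hi => Metric.closedBall_subset_closedBall' ?_
    linarith [(hI i hi).1.1, (hI i hi).1.2, Metric.mem_closedBall.1 (hIS hi)]

end Koranyi

/-- Weak `H`-quasisymmetry: if `a` is not farther from `x` than `b`, then `f a` is at most `H` times
as far from `f x` as `f b`. -/
def WeakQS {X Y : Type*} [PseudoMetricSpace X] [PseudoMetricSpace Y] (f : X → Y) (H : ℝ) : Prop :=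
  ∀ x a b, dist x a ≤ dist x b → dist (f x) (f a) ≤ H * dist (f x) (f b)

namespace Koranyi

variable {f : Koranyi ≃ₜ Koranyi} {M R : ℝ} {x a b : Koranyi}

lemma exists_ray_preimage (f : Koranyi ≃ₜ Koranyi) (x a : Koranyi) :
    ∃ c : ℝ → Koranyi, Continuous c ∧ c 0 = x ∧ c 1 = a ∧
      ∀ s, 0 ≤ s → dist (f x) (f (c s)) = s * dist (f x) (f a) := by
  obtain ⟨c, hc, hc1, hdist⟩ := exists_ray (f x) (f a)
  refine ⟨f.symm ∘ c, f.symm.continuous.comp hc, ?_, ?_, fun s hs => ?_⟩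
  · have : dist (f x) (c 0) = 0 := by rw [hdist 0 le_rfl, zero_mul]
    rw [Function.comp_apply, ← dist_eq_zero.1 this, f.symm_apply_apply]
  · rw [Function.comp_apply, hc1, f.symm_apply_apply]
  · rw [Function.comp_apply, f.apply_symm_apply, hdist s hs]

lemma Icc_subset_dist_image_of_dist_le (f : Koranyi ≃ₜ Koranyi) (x b : Koranyi) :
    Icc 0 (dist x b) ⊆ dist x ''
      {p ∈ Metric.closedBall x (2 * dist x b) | dist (f x) (f p) ≤ dist (f x) (f b)} := by
  obtain ⟨c, hc, hc0, hc1, hdist⟩ := exists_ray_preimage f x b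
  have hivt := intermediate_value_Icc (zero_le_one' ℝ)
    (continuous_const.dist hc : Continuous fun s => dist x (c s)).continuousOn
  simp only [hc0, hc1, dist_self] at hivt
  intro v hv
  obtain ⟨s, hs, rfl⟩ := hivt hv
  refine ⟨c s, ⟨Metric.mem_closedBall'.2 ?_, ?_⟩, rfl⟩
  · linarith [hv.2, hv.1]
  · rw [hdist s hs.1]
    exact mul_le_of_le_one_left dist_nonneg hs.2

lemma Icc_subset_dist_image_of_le_dist (f : Koranyi ≃ₜ Koranyi) (hne : f x ≠ f a)
    (ha : dist x a ≤ R) :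
    Icc 0 R ⊆ dist a ''
      {p ∈ Metric.closedBall x (2 * R) | dist (f x) (f a) ≤ dist (f x) (f p)} := by
  obtain ⟨c, hc, -, hc1, hdist⟩ := exists_ray_preimage f x a
  have hpos : 0 < dist (f x) (f a) := dist_pos.2 hne
  obtain ⟨T, hT, hRT⟩ : ∃ T, 1 ≤ T ∧ R ≤ dist a (c T) := by
    by_contra! hbd
    have hT : 1 ≤ 2 + outer f a R / dist (f x) (f a) := by
      linarith [div_nonneg (outer_nonneg (f := f) (x := a) (r := R)) hpos.le]
    have hfar := hdist _ (zero_le_one.trans hT)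
    rw [add_mul, div_mul_cancel₀ _ hpos.ne'] at hfar
    linarith [dist_le_outer f.continuous (hbd _ hT).le,
      dist_triangle (f x) (f a) (f (c (2 + outer f a R / dist (f x) (f a))))]
  have hivt := intermediate_value_Icc hT
    (continuous_const.dist hc : Continuous fun s => dist a (c s)).continuousOn
  simp only [hc1, dist_self] at hivt
  intro v hv
  obtain ⟨s, hs, rfl⟩ := hivt ⟨hv.1, hv.2.trans hRT⟩
  refine ⟨c s, ⟨Metric.mem_closedBall'.2 ?_, ?_⟩, rfl⟩
  · linarith [hv.2, dist_triangle x a (c s)]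
  · rw [hdist s (zero_le_one.trans hs.1)]
    exact le_mul_of_one_le_left hpos.le hs.1

theorem exists_weakQS (hM : 0 < M) (hf : ∀ x, ∀ᶠ r in 𝓝[>] (0 : ℝ), RoundAt f M x r) :
    ∃ H, 1 ≤ H ∧ WeakQS f H := by
  have hκ : 0 < loewnerConst ^ 4 / 448 := by have := loewnerConst_pos; positivity
  obtain ⟨n, hn, hcutoff⟩ := exists_oscBound_logCutoff_sum_lt hM hf hκ
  refine ⟨2 ^ n, one_le_pow₀ one_le_two, fun x a b hab => ?_⟩
  by_contra! hstretch
  have hR : 0 < dist x b := by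
    rw [dist_pos]
    rintro rfl
    rw [dist_self, dist_le_zero] at hab
    simp [← hab] at hstretch
  have hl : 0 < dist (f x) (f b) := dist_pos.2 (f.injective.ne (dist_pos.1 hR))
  have hne : f x ≠ f a := dist_pos.1 (hstretch.trans_le' (by positivity))
  have hzero : Icc 0 (dist x b) ⊆ dist x '' {p ∈ Metric.closedBall x (2 * dist x b) |
      logCutoff (dist (f x) (f b)) n (dist (f x) (f p)) = 0} :=
    (Icc_subset_dist_image_of_dist_le f x b).trans
      (image_mono fun p hp => ⟨hp.1, logCutoff_of_le hp.2⟩)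
  have hone : Icc 0 (dist x b) ⊆ dist a '' {p ∈ Metric.closedBall x (2 * dist x b) |
      logCutoff (dist (f x) (f b)) n (dist (f x) (f p)) = 1} :=
    (Icc_subset_dist_image_of_le_dist f hne hab).trans
      (image_mono fun p hp => ⟨hp.1, logCutoff_of_ge hl hn (hstretch.le.trans hp.2)⟩)
  obtain ⟨η, hη, hbig⟩ := exists_scale_loewnerConst_le_sum_osc
    ((continuous_logCutoff hl).comp (continuous_const.dist f.continuous)) hR
    (LipschitzWith.dist_right x) (LipschitzWith.dist_right a) hzero hone
  obtain ⟨I, r, o, hI, hd, hcov, hsmall⟩ := hcutoff x hl (by positivity : 0 < 54 * dist x b) hη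
  exact hsmall.not_ge (hbig I r o hI hd hcov)

end Koranyi

lemma mul_measure_le_lintegral_lintegral {X : Type*} [MeasurableSpace X] {μ : Measure X}
    {A B C : Set X} (hA : MeasurableSet A) (hB : MeasurableSet B) (hAC : A ⊆ C) (hBC : B ⊆ C)
    {F : X → X → ℝ≥0∞} {c : ℝ≥0∞} (hF : ∀ p ∈ A, ∀ q ∈ B, c ≤ F p q) :
    c * μ A * μ B ≤ ∫⁻ p in C, ∫⁻ q in C, F p q ∂μ ∂μ := by
  refine le_trans ?_ (lintegral_mono_set hAC)
  rw [mul_right_comm, ← setLIntegral_const]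
  refine setLIntegral_mono' hA fun p hp => ?_
  rw [← setLIntegral_const]
  exact (setLIntegral_mono' hB (hF p hp)).trans (lintegral_mono_set hBC)

lemma exists_cthickening_measure_le {X : Type*} [MetricSpace X] [ProperSpace X]
    [MeasurableSpace X] [OpensMeasurableSpace X] {μ : Measure X} [IsFiniteMeasureOnCompacts μ]
    {E : Set X} (hE : IsCompact E) (hE₀ : μ E = 0) {r : ℝ} (hr : 0 < r) {ε : ℝ≥0∞} (hε : ε ≠ 0) :
    ∃ δ ∈ Ioc 0 r, μ (Metric.cthickening δ E) ≤ ε := by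
  have hlim : Tendsto (fun δ => μ (Metric.cthickening δ E)) (𝓝[>] 0) (𝓝 0) := by
    rw [← hE₀]
    exact (tendsto_measure_cthickening_of_isCompact hE).mono_left nhdsWithin_le_nhds
  obtain ⟨δ, hle, hδ⟩ :=
    ((hlim.eventually (gt_mem_nhds hε.bot_lt)).and (Ioc_mem_nhdsGT hr)).exists
  exact ⟨δ, hδ, hle.le⟩

section Outer

variable {X Y : Type*} [PseudoMetricSpace X] [PseudoMetricSpace Y] {f : X → Y} {H r s : ℝ}
  {x a b : X}

lemma WeakQS.roundAt (hf : WeakQS f H) : RoundAt f H x r :=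
  fun q q' hq hq' => hf x q q' (hq.trans hq')

variable [ProperSpace X]

lemma outer_mono (hf : Continuous f) (hr : 0 ≤ r) (hrs : r ≤ s) : outer f x r ≤ outer f x s := by
  obtain ⟨q, hq, hqr⟩ := exists_dist_eq_outer hf x hr
  exact hqr ▸ dist_le_outer hf (hq.trans hrs)

lemma OscBound.of_outer (hf : Continuous f) (y : Y) {I : Finset X} {ρ : X → ℝ} {R : ℝ}
    (hρ : ∀ i ∈ I, ρ i ∈ Ioc 0 R) :
    OscBound (fun p => dist y (f p)) I ρ (fun i => 2 * outer f i (ρ i)) R where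
  pos i hi := (hρ i hi).1
  le i hi := (hρ i hi).2
  nonneg _ _ := mul_nonneg zero_le_two outer_nonneg
  osc i _ p hp q hq := by
    rw [dist_comm y, dist_comm y]
    have hip := dist_le_outer hf (Metric.mem_ball'.1 hp).le
    have hiq := dist_le_outer hf (Metric.mem_ball'.1 hq).le
    exact (abs_dist_sub_le _ _ _).trans
      (by linarith [dist_triangle_left (f p) (f q) (f i)])

lemma WeakQS.outer_le_mul_dist (hf : WeakQS f H) (hc : Continuous f) (hr : 0 ≤ r)
    (ha : r ≤ dist x a) : outer f x r ≤ H * dist (f x) (f a) := by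
  obtain ⟨q, hq, hqr⟩ := exists_dist_eq_outer hc x hr
  exact hqr ▸ hf x q a (hq.trans ha)

lemma WeakQS.outer_le_sq_mul_dist (hf : WeakQS f H) (hH : 0 ≤ H) (hc : Continuous f) (hr : 0 ≤ r)
    (ha : r ≤ dist x a) (hab : dist x a ≤ dist a b) :
    outer f x r ≤ H ^ 2 * dist (f a) (f b) := by
  have hxab := hf a x b (by rwa [dist_comm])
  calc outer f x r ≤ H * dist (f x) (f a) := hf.outer_le_mul_dist hc hr ha
    _ ≤ H * (H * dist (f a) (f b)) := by rw [dist_comm]; gcongr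
    _ = H ^ 2 * dist (f a) (f b) := by ring

lemma dist_le_of_chain (hf : Continuous f) {C : ℝ} {c : ℕ → X} (hC : 1 ≤ C)
    (hC' : ∀ x y, dist x y ≤ r → outer f y r ≤ C * outer f x r)
    (hstep : ∀ j, dist (c j) (c (j + 1)) ≤ r) (n : ℕ) :
    dist (f (c 0)) (f (c n)) ≤ n * C ^ n * outer f (c 0) r := by
  have hpow (j : ℕ) : outer f (c j) r ≤ C ^ j * outer f (c 0) r := by
    induction j with
    | zero => simp
    | succ j ih =>
      calc outer f (c (j + 1)) r ≤ C * outer f (c j) r := hC' _ _ (hstep j)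
        _ ≤ C * (C ^ j * outer f (c 0) r) := by gcongr
        _ = C ^ (j + 1) * outer f (c 0) r := by ring
  calc dist (f (c 0)) (f (c n))
      ≤ ∑ j ∈ Finset.range n, dist (f (c j)) (f (c (j + 1))) :=
        dist_le_range_sum_dist (fun j => f (c j)) n
    _ ≤ ∑ _j ∈ Finset.range n, C ^ n * outer f (c 0) r := by
        refine Finset.sum_le_sum fun j hj => (dist_le_outer hf (hstep j)).trans
          ((hpow j).trans ?_)
        have := outer_nonneg (f := f) (x := c 0) (r := r)
        gcongr
        exact (Finset.mem_range.1 hj).le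
    _ = n * C ^ n * outer f (c 0) r := by
        rw [Finset.sum_const, Finset.card_range, nsmul_eq_mul, mul_assoc]

end Outer

namespace Koranyi

variable {f : Koranyi ≃ₜ Koranyi} {H r : ℝ} {x y : Koranyi}

lemma exists_isometry_line (x : Koranyi) : ∃ γ : ℝ → Koranyi, Isometry γ ∧ γ 0 = x :=
  ⟨fun s => x * mk s 0 0, (isometry_mul_left x).comp isometry_mk_x, mul_one x⟩

lemma exists_chain {n : ℕ} (hr : 0 ≤ r) (hxy : dist x y ≤ n * r) :
    ∃ c : ℕ → Koranyi, c 0 = x ∧ c (6 * n) = y ∧ ∀ j, dist (c j) (c (j + 1)) ≤ r := by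
  rw [dist_eq_norm_inv_mul] at hxy
  obtain ⟨γ, hγ, hγ₀, hγT⟩ := reachableIn_of_norm_le hxy
  refine ⟨fun j => x * γ (j * r), by simp [hγ₀], ?_, fun j => ?_⟩
  · simp only
    rw [show ((6 * n : ℕ) : ℝ) * r = 6 * (n * r) by push_cast; ring, hγT, mul_inv_cancel_left]
  · simp only [dist_mul_left]
    refine (dist_le_sub_of_lipschitzWith_one hγ ?_).trans_eq ?_
    · gcongr
      exact j.le_succ
    · push_cast
      ring

lemma outer_pos (f : Koranyi ≃ₜ Koranyi) (x : Koranyi) (hr : 0 < r) : 0 < outer f x r := by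
  obtain ⟨γ, hγ, rfl⟩ := exists_isometry_line x
  refine (dist_pos.2 ?_).trans_le
    (dist_le_outer f.continuous (q := γ r) (by simp [hγ.dist_eq, abs_of_pos hr]))
  exact f.injective.ne (hγ.injective.ne hr.ne)

lemma exists_dist_le_le_dist (x y : Koranyi) (hr : 0 ≤ r) : ∃ q, dist x q ≤ r ∧ r ≤ dist y q := by
  obtain ⟨γ, hγ, rfl⟩ := exists_isometry_line x
  have hdist (s : ℝ) : dist (γ 0) (γ s) = |s| := by
    rw [hγ.dist_eq, dist_zero_left, Real.norm_eq_abs]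
  have htwo : dist (γ r) (γ (-r)) = 2 * r := by
    rw [hγ.dist_eq, Real.dist_eq, abs_of_nonneg (by linarith)]
    ring
  by_contra! hnear
  linarith [hnear (γ r) ((hdist r).trans_le (abs_of_nonneg hr).le),
    hnear (γ (-r)) ((hdist (-r)).trans_le (by rw [abs_neg, abs_of_nonneg hr])),
    dist_triangle_left (γ r) (γ (-r)) y]

lemma outer_le_mul_of_dist_le (hf : WeakQS f H) (hH : 1 ≤ H) (hr : 0 ≤ r) (hxy : dist x y ≤ r) :
    outer f y r ≤ 2 * H * outer f x r := by
  obtain ⟨q, hxq, hyq⟩ := exists_dist_le_le_dist x y hr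
  calc outer f y r ≤ H * dist (f y) (f q) := hf.outer_le_mul_dist f.continuous hr hyq
    _ ≤ H * (outer f x r + outer f x r) := by
        gcongr
        exact (dist_triangle_left _ _ (f x)).trans
          (add_le_add (dist_le_outer f.continuous hxy) (dist_le_outer f.continuous hxq))
    _ = 2 * H * outer f x r := by ring

lemma outer_mul_le (hf : WeakQS f H) (hH : 1 ≤ H) (x : Koranyi) (hr : 0 ≤ r) (n : ℕ) :
    outer f x (n * r) ≤ (6 * n : ℕ) * (2 * H) ^ (6 * n) * outer f x r := by
  obtain ⟨y, hy, hyr⟩ := exists_dist_eq_outer f.continuous x (by positivity : 0 ≤ n * r)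
  obtain ⟨c, rfl, rfl, hstep⟩ := exists_chain hr hy
  rw [← hyr]
  exact dist_le_of_chain f.continuous (by linarith)
    (fun _ _ => outer_le_mul_of_dist_le hf hH hr) hstep (6 * n)

lemma exists_seq_dist_eq_div_pow (x : Koranyi) (hr : 0 ≤ r) : ∃ a : ℕ → Koranyi,
    (∀ j, dist x (a j) = r / 2 ^ j) ∧ ∀ i j, i < j → r / 2 ^ j ≤ dist (a j) (a i) := by
  obtain ⟨γ, hγ, rfl⟩ := exists_isometry_line x
  refine ⟨fun j => γ (r / 2 ^ j), fun j => ?_, fun i j hij => ?_⟩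
  · rw [hγ.dist_eq, dist_zero_left, Real.norm_of_nonneg (by positivity)]
  · have hhalf : r / 2 ^ j ≤ r / 2 ^ i / 2 := by
      rw [div_div, ← pow_succ]
      gcongr
      exacts [one_le_two, hij]
    rw [hγ.dist_eq, dist_comm]
    refine le_trans ?_ (le_abs_self _)
    linarith

lemma card_mul_pow_le_of_separated {ι : Type*} {I : Finset ι} {b : ι → Koranyi} {z : Koranyi}
    {τ T : ℝ} (hτ : 0 ≤ τ) (hT : 0 ≤ T) (hb : ∀ i ∈ I, dist (b i) z ≤ T)
    (hsep : (I : Set ι).Pairwise fun i j => 2 * τ ≤ dist (b i) (b j)) :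
    I.card * τ ^ 4 ≤ (T + τ) ^ 4 := by
  have hpack := sum_le_of_disjoint_measure volume unitBallVolume_pos.ne' unitBallVolume_lt_top.ne
    zero_le_one (Even.pow_nonneg (by decide) _)
    (fun i hi j hj hij => Metric.ball_disjoint_ball ((two_mul τ).ge.trans (hsep hi hj hij)))
    (fun _ _ => measurableSet_ball)
    (fun i hi => Metric.ball_subset_ball' (by linarith [hb i hi] : τ + dist (b i) z ≤ T + τ))
    (fun _ _ => pow_nonneg hτ 4) (fun i _ => by rw [volume_ball _ hτ, ENNReal.ofReal_one, one_mul])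
    (volume_ball z (add_nonneg hT hτ)).le
  rwa [Finset.sum_const, nsmul_eq_mul, one_mul] at hpack

lemma outer_div_pow_le (hf : WeakQS f H) (hH : 1 ≤ H) (x : Koranyi) (hr : 0 ≤ r) (m : ℕ) :
    (m + 1) * outer f x (r / 2 ^ m) ^ 4 ≤ (4 * H ^ 2 * outer f x r) ^ 4 := by
  obtain ⟨a, hxa, haa⟩ := exists_seq_dist_eq_div_pow x hr
  have hrm : 0 ≤ r / 2 ^ m := by positivity
  have hle (j : ℕ) : r / 2 ^ j ≤ r := div_le_self hr (one_le_pow₀ one_le_two)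
  set τ := outer f x (r / 2 ^ m) / (2 * H ^ 2) with hτ
  have hτ₀ : 0 ≤ τ := div_nonneg outer_nonneg (by positivity)
  have hτr : τ ≤ outer f x r :=
    (div_le_self outer_nonneg (by nlinarith)).trans (outer_mono f.continuous hrm (hle m))
  have hsep {i j : ℕ} (hij : i < j) (hj : j ≤ m) : 2 * τ ≤ dist (f (a j)) (f (a i)) := by
    rw [hτ, mul_div_assoc', mul_div_mul_left _ _ two_ne_zero, div_le_iff₀' (by positivity)]
    refine hf.outer_le_sq_mul_dist (by positivity) f.continuous hrm ?_
      ((hxa j).trans_le (haa i j hij))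
    rw [hxa]
    gcongr
    exact one_le_two
  have hpack := card_mul_pow_le_of_separated (I := Finset.range (m + 1)) (b := fun j => f (a j))
    (z := f x) hτ₀ outer_nonneg
    (fun j _ => (dist_comm _ _).trans_le (dist_le_outer f.continuous ((hxa j).trans_le (hle j))))
    fun i hi j hj hij => by
      rw [Finset.coe_range, mem_Iio, Nat.lt_succ_iff] at hi hj
      rcases lt_or_gt_of_ne hij with h | h
      · exact (hsep h hj).trans_eq (dist_comm _ _)
      · exact hsep h hi
  rw [Finset.card_range, Nat.cast_succ] at hpack
  calc (m + 1) * outer f x (r / 2 ^ m) ^ 4 = (m + 1) * τ ^ 4 * (2 * H ^ 2) ^ 4 := by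
        rw [hτ]; field_simp
    _ ≤ (outer f x r + τ) ^ 4 * (2 * H ^ 2) ^ 4 := by gcongr
    _ ≤ (outer f x r + outer f x r) ^ 4 * (2 * H ^ 2) ^ 4 := by
        have := add_nonneg outer_nonneg hτ₀ (a := outer f x r)
        gcongr
    _ = (4 * H ^ 2 * outer f x r) ^ 4 := by ring

lemma exists_outer_div_pow_le (hf : WeakQS f H) (hH : 1 ≤ H) :
    ∃ m : ℕ, ∀ x r, 0 ≤ r → 2 * H * outer f x (r / 2 ^ m) ≤ outer f x r := by
  obtain ⟨m, hm⟩ := exists_nat_gt ((8 * H ^ 3) ^ 4)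
  refine ⟨m, fun x r hr => ?_⟩
  have hpow : (8 * H ^ 3 * outer f x (r / 2 ^ m)) ^ 4 ≤ (4 * H ^ 2 * outer f x r) ^ 4 := by
    rw [mul_pow]
    refine le_trans ?_ (outer_div_pow_le hf hH x hr m)
    gcongr
    linarith
  refine le_of_mul_le_mul_left ?_ (by positivity : 0 < 4 * H ^ 2)
  have := le_of_pow_le_pow_left₀ four_ne_zero (mul_nonneg (by positivity) outer_nonneg) hpow
  linarith

lemma le_lintegral_abs_dist_sub (hf : WeakQS f H) (hH : 0 < H) (x : Koranyi) (hr : 0 < r) {s : ℝ}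
    (hs : 0 ≤ s) (hsr : s ≤ r) (hout : 2 * H * outer f x s ≤ outer f x r) :
    ENNReal.ofReal (outer f x r / (2 * H) * s ^ 4 * (r / 2) ^ 4) * unitBallVolume ^ 2 ≤
      ∫⁻ p in Metric.ball x (2 * r), ∫⁻ q in Metric.ball x (2 * r),
        ENNReal.ofReal |dist (f x) (f p) - dist (f x) (f q)| := by
  obtain ⟨γ, hγ, rfl⟩ := exists_isometry_line x
  have hz : dist (γ (3 * r / 2)) (γ 0) = 3 * r / 2 := by
    rw [hγ.dist_eq, dist_zero_right, Real.norm_of_nonneg (by positivity)]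
  have hc : 0 ≤ outer f (γ 0) r / (2 * H) := div_nonneg outer_nonneg (by positivity)
  refine le_trans (le_of_eq ?_) (mul_measure_le_lintegral_lintegral
    (A := Metric.ball (γ 0) s) (B := Metric.ball (γ (3 * r / 2)) (r / 2))
    (c := ENNReal.ofReal (outer f (γ 0) r / (2 * H))) measurableSet_ball measurableSet_ball
    (Metric.ball_subset_ball (by linarith)) (Metric.ball_subset_ball' (by linarith))
    fun p hp q hq => ENNReal.ofReal_le_ofReal ?_)
  · rw [volume_ball _ hs, volume_ball _ (by positivity), ENNReal.ofReal_mul (by positivity),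
      ENNReal.ofReal_mul hc]
    ring
  · have hp' : dist (f (γ 0)) (f p) ≤ outer f (γ 0) r / (2 * H) := by
      rw [le_div_iff₀' (by positivity)]
      refine le_trans ?_ hout
      gcongr
      exact dist_le_outer f.continuous (Metric.mem_ball'.1 hp).le
    have hq' : 2 * (outer f (γ 0) r / (2 * H)) ≤ dist (f (γ 0)) (f q) := by
      rw [mul_div_assoc', mul_div_mul_left _ _ two_ne_zero, div_le_iff₀' hH]
      refine hf.outer_le_mul_dist f.continuous hr.le ?_
      linarith [dist_triangle_left (γ (3 * r / 2)) (γ 0) q, Metric.mem_ball.1 hq,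
        dist_comm (γ 0) q]
    rw [abs_sub_comm]
    exact le_trans (by linarith) (le_abs_self _)

lemma mul_outer_le_sum_osc (hf : WeakQS f H) (hH : 0 < H) {m : ℕ} (hr : 0 < r)
    (hout : 2 * H * outer f x (r / 2 ^ m) ≤ outer f x r) {I : Finset Koranyi} {ρ o : Koranyi → ℝ}
    (hI : OscBound (fun p => dist (f x) (f p)) I ρ o (2 * r))
    (hcov : Metric.closedBall x (26 * r) ⊆ ⋃ i ∈ I, Metric.ball i (ρ i)) :
    r ^ 3 * outer f x r ≤ 2 ^ (4 * m) * (3145728 * H) * ∑ i ∈ I, o i * ρ i ^ 3 := by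
  rw [show 26 * r = 13 * (2 * r) by ring] at hcov
  have hosc := (le_lintegral_abs_dist_sub hf hH x hr (by positivity)
    (div_le_self hr.le (one_le_pow₀ one_le_two)) hout).trans
      (lintegral_lintegral_sub_le hI (continuous_const.dist f.continuous) (by positivity) hcov)
  have hsum : 0 ≤ ∑ i ∈ I, o i * ρ i ^ 3 := Finset.sum_nonneg fun i hi =>
    mul_nonneg (hI.nonneg i hi) (pow_nonneg (hI.pos i hi).le 3)
  rw [ENNReal.mul_le_mul_iff_left (pow_ne_zero 2 unitBallVolume_pos.ne')
    (ENNReal.pow_ne_top unitBallVolume_lt_top.ne), ENNReal.ofReal_le_ofReal_iff (by positivity)]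
    at hosc
  refine le_of_mul_le_mul_left ?_ (by positivity : 0 < r ^ 5)
  calc r ^ 5 * (r ^ 3 * outer f x r)
      = 2 ^ (4 * m) * (32 * H) *
          (outer f x r / (2 * H) * (r / 2 ^ m) ^ 4 * (r / 2) ^ 4) := by
        rw [mul_comm 4 m, pow_mul]
        field_simp
        ring
    _ ≤ 2 ^ (4 * m) * (32 * H) * (3072 * (2 * r) ^ 5 * ∑ i ∈ I, o i * ρ i ^ 3) := by gcongr
    _ = r ^ 5 * (2 ^ (4 * m) * (3145728 * H) * ∑ i ∈ I, o i * ρ i ^ 3) := by ring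

lemma exists_ofReal_outer_pow_le (hf : WeakQS f H) (hH : 1 ≤ H) : ∃ P > 0, ∀ i, ∀ δ > 0,
    ENNReal.ofReal ((2 * outer f i δ) ^ 4) * unitBallVolume ≤
      ENNReal.ofReal (P ^ 4) * volume (f '' Metric.closedBall i (δ / 5)) := by
  set C : ℝ := (6 * 5 : ℕ) * (2 * H) ^ (6 * 5)
  have hH₀ : 0 < H := by linarith
  refine ⟨2 * C * H, by positivity, fun i δ hδ => ?_⟩
  have hround := ofReal_outer_pow_le (hf.roundAt (x := i) (r := δ / 5)) hH₀ (by positivity)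
  refine le_trans ?_ (mul_le_mul_right hround _)
  rw [← mul_assoc, ← ENNReal.ofReal_mul (by positivity), ← mul_pow]
  have hδC : outer f i δ ≤ C * outer f i (δ / 5) := by
    have := outer_mul_le hf hH i (by positivity : 0 ≤ δ / 5) 5
    rwa [Nat.cast_ofNat, mul_div_cancel₀ δ (by norm_num)] at this
  have hle : 2 * outer f i δ ≤ 2 * C * H * (outer f i (δ / 5) / H) :=
    calc 2 * outer f i δ ≤ 2 * (C * outer f i (δ / 5)) := by gcongr
      _ = 2 * C * H * (outer f i (δ / 5) / H) := by field_simp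
  exact mul_le_mul_left (ENNReal.ofReal_le_ofReal
    (pow_le_pow_left₀ (mul_nonneg zero_le_two outer_nonneg) hle 4)) _

lemma sum_outer_mul_pow_le {P δ S T : ℝ} (hP : 0 ≤ P) (hδ : 0 ≤ δ) (hS : 0 ≤ S) (hT : 0 ≤ T)
    {J : Finset Koranyi}
    (hout : ∀ i ∈ J, ENNReal.ofReal ((2 * outer f i δ) ^ 4) * unitBallVolume ≤
      ENNReal.ofReal (P ^ 4) * volume (f '' Metric.closedBall i (δ / 5)))
    (hd : (J : Set Koranyi).PairwiseDisjoint fun i => Metric.closedBall i (δ / 5))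
    {A B : Set Koranyi} (hA : volume A ≤ ENNReal.ofReal (S ^ 4) * unitBallVolume)
    (hB : volume B ≤ ENNReal.ofReal (T ^ 4) * unitBallVolume)
    (hJA : ∀ i ∈ J, Metric.closedBall i (δ / 5) ⊆ A)
    (hJB : ∀ i ∈ J, f '' Metric.closedBall i (δ / 5) ⊆ B) :
    ∑ i ∈ J, 2 * outer f i δ * δ ^ 3 ≤ P * T * (5 * S) ^ 3 := by
  have ho (i : Koranyi) : 0 ≤ 2 * outer f i δ := mul_nonneg zero_le_two outer_nonneg
  refine sum_mul_pow_le J 3 (g := fun _ => δ) (fun i _ => ho i) (fun _ _ => hδ) (by positivity)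
    (by positivity) ?_ (sum_radius_pow_le (fun _ _ => hδ) hd hA hJA)
  rw [mul_pow]
  exact sum_le_of_image_closedBall_subset hd (by positivity) (by positivity) hJB
    (fun i _ => pow_nonneg (ho i) 4) hout hB

/- The balls of a fine cover split into those meeting `E`, which lie in a small neighbourhood of
`E`, and those missing `E`, whose images lie in the complement of `f '' E`: in Hölder's inequality
one of the two factors is small for either family. -/
lemma sum_outer_mul_pow_le_of_volume_compl_le {P δ κ s : ℝ} (hP : 0 ≤ P) (hδ : 0 < δ) (hr : 0 < r)
    (hδr : δ ≤ r) (hκ : 0 ≤ κ) (hκ₁ : κ ≤ 1) {I : Finset Koranyi}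
    (hout : ∀ i ∈ I, ENNReal.ofReal ((2 * outer f i δ) ^ 4) * unitBallVolume ≤
      ENNReal.ofReal (P ^ 4) * volume (f '' Metric.closedBall i (δ / 5)))
    (hd : (I : Set Koranyi).PairwiseDisjoint fun i => Metric.closedBall i (δ / 5))
    (hIx : (I : Set Koranyi) ⊆ Metric.closedBall x (26 * r)) (hs : s = outer f x (27 * r))
    {E : Set Koranyi}
    (hE : volume (Metric.cthickening δ E) ≤ ENNReal.ofReal ((κ * r) ^ 4) * unitBallVolume)
    (hfE : volume ((f '' E)ᶜ ∩ Metric.closedBall (f x) s) ≤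
      ENNReal.ofReal ((κ * s) ^ 4) * unitBallVolume) :
    ∑ i ∈ I, 2 * outer f i δ * δ ^ 3 ≤ 3000000 * P * κ * (r ^ 3 * s) := by
  classical
  have hs₀ : 0 ≤ s := hs ▸ outer_nonneg
  have hκ₃ : κ ^ 3 ≤ κ := pow_le_of_le_one hκ hκ₁ three_ne_zero
  have hsum : P * s * (5 * (κ * r)) ^ 3 + P * (κ * s) * (5 * (27 * r)) ^ 3 ≤
      3000000 * P * κ * (r ^ 3 * s) :=
    calc _ = P * s * r ^ 3 * (125 * κ ^ 3 + 2460375 * κ) := by ring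
      _ ≤ P * s * r ^ 3 * (3000000 * κ) := by gcongr; linarith
      _ = 3000000 * P * κ * (r ^ 3 * s) := by ring
  refine le_trans ?_ hsum
  have hball : ∀ i ∈ I, Metric.closedBall i (δ / 5) ⊆ Metric.closedBall x (27 * r) := fun i hi =>
    Metric.closedBall_subset_closedBall' (by linarith [Metric.mem_closedBall.1 (hIx hi)])
  have himage : ∀ i ∈ I, f '' Metric.closedBall i (δ / 5) ⊆ Metric.closedBall (f x) s := by
    rintro i hi _ ⟨p, hp, rfl⟩
    rw [Metric.mem_closedBall', hs]
    exact dist_le_outer f.continuous (Metric.mem_closedBall'.1 (hball i hi hp))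
  have hsub (p : Koranyi → Prop) [DecidablePred p] : I.filter p ⊆ I := Finset.filter_subset _ _
  rw [← Finset.sum_filter_add_sum_filter_not I
    fun i => (Metric.closedBall i (δ / 5) ∩ E).Nonempty]
  refine add_le_add
    (sum_outer_mul_pow_le hP hδ.le (by positivity) hs₀ (fun i hi => hout i (hsub _ hi))
      (hd.subset (Finset.coe_subset.2 (hsub _))) hE (volume_closedBall (f x) hs₀).le
      (fun i hi p hp => ?_) fun i hi => himage i (hsub _ hi))
    (sum_outer_mul_pow_le hP hδ.le (by positivity) (by positivity)
      (fun i hi => hout i (hsub _ hi)) (hd.subset (Finset.coe_subset.2 (hsub _)))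
      (volume_closedBall x (by positivity)).le hfE (fun i hi => hball i (hsub _ hi))
      fun i hi => subset_inter ?_ (himage i (hsub _ hi)))
  · obtain ⟨q, hq, hqE⟩ := (Finset.mem_filter.1 hi).2
    refine Metric.mem_cthickening_of_dist_le p q δ E hqE ?_
    linarith [dist_triangle_right p q i, Metric.mem_closedBall.1 hp, Metric.mem_closedBall.1 hq]
  · rintro _ ⟨p, hp, rfl⟩ hpE
    exact (Finset.mem_filter.1 hi).2 ⟨p, hp, (f.injective.mem_set_image).1 hpE⟩

lemma exists_lt_volume_compl_image_inter_closedBall (hf : WeakQS f H) (hH : 1 ≤ H) :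
    ∃ κ > 0, ∀ (x : Koranyi) (r : ℝ) (E : Set Koranyi), 0 < r → IsCompact E → volume E = 0 →
      ENNReal.ofReal ((κ * outer f x (27 * r)) ^ 4) * unitBallVolume <
        volume ((f '' E)ᶜ ∩ Metric.closedBall (f x) (outer f x (27 * r))) := by
  obtain ⟨m, hm⟩ := exists_outer_div_pow_le hf hH
  obtain ⟨P, hP, hout⟩ := exists_ofReal_outer_pow_le hf hH
  set C : ℝ := (6 * 27 : ℕ) * (2 * H) ^ (6 * 27)
  set D : ℝ := 2 ^ (4 * m) * (3145728 * H) * (3000000 * P * C)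
  have hD : 0 < D := by positivity
  obtain ⟨κ, ⟨hκ, hκ₁⟩, hκD⟩ : ∃ κ ∈ Ioc (0 : ℝ) 1, D * κ < 1 :=
    ⟨min 1 (1 / (2 * D)), ⟨by positivity, min_le_left _ _⟩,
      (mul_le_mul_of_nonneg_left (min_le_right _ _) hD.le).trans_lt (by field_simp; norm_num)⟩
  refine ⟨κ, hκ, fun x r E hr hE hE₀ => ?_⟩
  by_contra! hdens
  obtain ⟨δ, ⟨hδ, hδr⟩, hthick⟩ := exists_cthickening_measure_le hE hE₀ hr
    (ENNReal.mul_pos (ENNReal.ofReal_pos.2 (by positivity : 0 < (κ * r) ^ 4)).ne'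
      unitBallVolume_pos.ne').ne'
  obtain ⟨I, hIx, hd, hcov⟩ :=
    exists_finset_cover (isCompact_closedBall x (26 * r)) (fun _ => δ) fun _ => hδ
  have hlower := mul_outer_le_sum_osc hf (by positivity) hr (hm x r hr.le)
    (.of_outer f.continuous (f x) fun _ _ => ⟨hδ, by linarith⟩) hcov
  have hupper := sum_outer_mul_pow_le_of_volume_compl_le hP.le hδ hr hδr hκ.le hκ₁
    (fun i _ => hout i δ hδ) hd hIx rfl hthick hdens
  have hC : outer f x (27 * r) ≤ C * outer f x r := by
    have := outer_mul_le hf hH x hr.le 27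
    rwa [Nat.cast_ofNat] at this
  have hpos := outer_pos f x hr
  refine lt_irrefl (r ^ 3 * outer f x r) ?_
  calc r ^ 3 * outer f x r
      ≤ 2 ^ (4 * m) * (3145728 * H) * ∑ i ∈ I, 2 * outer f i δ * δ ^ 3 := hlower
    _ ≤ 2 ^ (4 * m) * (3145728 * H) * (3000000 * P * κ * (r ^ 3 * (C * outer f x r))) := by
        gcongr
        exact hupper.trans (by gcongr)
    _ = D * κ * (r ^ 3 * outer f x r) := by ring
    _ < 1 * (r ^ 3 * outer f x r) := by gcongr
    _ = r ^ 3 * outer f x r := one_mul _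

end Koranyi

namespace Koranyi

variable {f : Koranyi ≃ₜ Koranyi} {H : ℝ} {E : Set Koranyi}

lemma tendsto_outer_nhdsGT (f : Koranyi ≃ₜ Koranyi) (x : Koranyi) :
    Tendsto (outer f x) (𝓝[>] 0) (𝓝[>] 0) := by
  refine (nhdsGT_basis 0).tendsto_right_iff.2 fun ε hε => ?_
  obtain ⟨δ, hδ, hfδ⟩ := exists_forall_dist_lt f.continuous (isCompact_singleton (x := x)) hε
  filter_upwards [Ioo_mem_nhdsGT hδ] with r hr
  obtain ⟨q, hq, hqr⟩ := exists_dist_eq_outer f.continuous x hr.1.le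
  exact ⟨outer_pos f x hr.1, hqr ▸ hfδ x rfl q (hq.trans_lt hr.2)⟩

lemma volume_image_eq_zero_of_isCompact (hf : WeakQS f H) (hH : 1 ≤ H) (hE : IsCompact E)
    (hE₀ : volume E = 0) : volume (f '' E) = 0 := by
  obtain ⟨κ, hκ, hporous⟩ := exists_lt_volume_compl_image_inter_closedBall hf hH
  refine measure_eq_zero_of_frequently_lt_measure_compl volume
    (hE.image f.continuous).measurableSet (c := ENNReal.ofReal (κ ^ 4))
    (ENNReal.ofReal_pos.2 (by positivity)).ne' ENNReal.ofReal_ne_top ?_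
  rintro _ ⟨x, -, rfl⟩
  refine (tendsto_outer_nhdsGT f x).frequently (Eventually.frequently ?_)
  filter_upwards [self_mem_nhdsWithin] with r hr
  have hr : 0 < r := hr
  have hlt := hporous x (r / 27) E (by positivity) hE hE₀
  rw [mul_div_cancel₀ r (by norm_num : (27 : ℝ) ≠ 0), mul_pow, ENNReal.ofReal_mul (by positivity),
    mul_assoc] at hlt
  rwa [volume_closedBall _ outer_nonneg]

theorem volume_image_eq_zero (hf : WeakQS f H) (hH : 1 ≤ H) (hE : volume E = 0) :
    volume (f '' E) = 0 := by
  refine measure_mono_null (image_mono (subset_toMeasurable volume E)) ?_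
  have hmeas : MeasurableSet (f '' toMeasurable volume E) :=
    f.toMeasurableEquiv.measurableEmbedding.measurableSet_image' (measurableSet_toMeasurable _ _)
  by_contra hne
  obtain ⟨K, hKE, hK, hKpos⟩ := hmeas.exists_lt_isCompact (pos_iff_ne_zero.2 hne)
  have hnull : volume (f.symm '' K) = 0 := by
    refine measure_mono_null ?_ ((measure_toMeasurable E).trans hE)
    rw [f.symm.image_eq_preimage_symm, f.symm_symm]
    exact (preimage_mono hKE).trans_eq (f.injective.preimage_image _)
  have hK₀ := volume_image_eq_zero_of_isCompact hf hH (hK.image f.symm.continuous) hnull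
  rw [f.image_symm, image_preimage_eq _ f.surjective] at hK₀
  exact hKpos.ne' hK₀

end Koranyi

section Jacobian

variable {f : Koranyi ≃ₜ Koranyi}

lemma eventually_roundAt_of_dilat_lt {M : ℝ≥0} {x : Koranyi} (hM : dilat f x < M) :
    ∀ᶠ r in 𝓝[>] (0 : ℝ), RoundAt f M x r := by
  filter_upwards [eventually_lt_of_limsup_lt hM] with r hr q q' hq hq'
  rw [← Koranyi.d_eq_dist] at hq hq'
  have hle : ENNReal.ofReal (d (f x) (f q)) ≤ M * ENNReal.ofReal (d (f x) (f q')) :=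
    calc ENNReal.ofReal (d (f x) (f q))
        ≤ ⨆ q ∈ {q | d x q ≤ r}, ENNReal.ofReal (d (f x) (f q)) := le_iSup₂_of_le q hq le_rfl
      _ ≤ M * ⨅ q ∈ {q | r ≤ d x q}, ENNReal.ofReal (d (f x) (f q)) :=
          (ENNReal.div_le_iff_le_mul (.inr ENNReal.coe_ne_top)
            (.inr (bot_le.trans_lt hM).ne')).1 hr.le
      _ ≤ M * ENNReal.ofReal (d (f x) (f q')) := mul_le_mul_right (iInf₂_le q' hq') _
  rw [Koranyi.d_eq_dist, Koranyi.d_eq_dist, ← ENNReal.ofReal_coe_nnreal,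
    ← ENNReal.ofReal_mul M.coe_nonneg] at hle
  exact (ENNReal.ofReal_le_ofReal_iff (mul_nonneg M.coe_nonneg dist_nonneg)).1 hle

theorem IsQC.volume_image_eq_zero (hf : IsQC f) {E : Set Koranyi} (hE : volume E = 0) :
    volume (f '' E) = 0 := by
  obtain ⟨M, hM⟩ := hf
  have hround : ∀ x, ∀ᶠ r in 𝓝[>] (0 : ℝ), RoundAt f (M + 1 : ℝ≥0) x r := fun x =>
    eventually_roundAt_of_dilat_lt ((hM x).trans_lt (by exact_mod_cast lt_add_one M))
  obtain ⟨H, hH, hqs⟩ := Koranyi.exists_weakQS (by positivity) hround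
  exact Koranyi.volume_image_eq_zero hqs hH hE

instance (f : Koranyi ≃ₜ Koranyi) : IsFiniteMeasureOnCompacts (volume.comap f) :=
  Measure.IsFiniteMeasureOnCompacts.comap volume f

lemma IsQC.comap_absolutelyContinuous (hf : IsQC f) : volume.comap f ≪ volume := fun s hs => by
  rw [f.measurableEmbedding.comap_apply, hf.volume_image_eq_zero hs]

lemma IsQC.volume_image_ball (hf : IsQC f) (x : Koranyi) {r : ℝ} (hr : 0 ≤ r) :
    volume (f '' Metric.ball x r) = volume (f '' Metric.closedBall x r) := by
  rw [← f.measurableEmbedding.comap_apply, ← f.measurableEmbedding.comap_apply]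
  refine measure_congr (hf.comap_absolutelyContinuous.ae_eq ?_)
  refine ae_eq_of_subset_of_measure_ge Metric.ball_subset_closedBall ?_
    measurableSet_ball.nullMeasurableSet measure_closedBall_lt_top.ne
  rw [Koranyi.volume_ball x hr, Koranyi.volume_closedBall x hr]

lemma IsQC.jac_ae_eq_rnDeriv (hf : IsQC f) :
    (fun x : Koranyi => jac f x) =ᵐ[volume] (volume.comap f).rnDeriv volume := by
  filter_upwards [(IsUnifLocDoublingMeasure.vitaliFamily (volume : Measure Koranyi)
    1).ae_tendsto_rnDeriv (volume.comap f)] with x hx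
  refine Tendsto.limsup_eq ((hx.comp (tendsto_closedBall_filterAt volume x)).congr' ?_)
  filter_upwards [self_mem_nhdsWithin] with r (hr : 0 < r)
  rw [Function.comp_apply, f.measurableEmbedding.comap_apply, ← hf.volume_image_ball x hr.le,
    Koranyi.volume_closedBall x hr.le, ← Koranyi.volume_ball x hr.le, Koranyi.ball_eq]
  rfl

lemma IsQC.aemeasurable_jac (hf : IsQC f) : AEMeasurable (fun x : Koranyi => jac f x) volume :=
  ⟨_, Measure.measurable_rnDeriv _ _, hf.jac_ae_eq_rnDeriv⟩

lemma IsQC.lintegral_mul_jac (hf : IsQC f) {ξ : Koranyi → ℝ≥0∞} (hξ : Measurable ξ) :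
    ∫⁻ p, ξ p * jac f p = ∫⁻ p, ξ (f.symm p) :=
  calc ∫⁻ p, ξ p * jac f p = ∫⁻ p, (volume.comap f).rnDeriv volume p * ξ p :=
        lintegral_congr_ae (hf.jac_ae_eq_rnDeriv.mono fun p hp => by
          simp only [← hp, mul_comm])
    _ = ∫⁻ p, ξ p ∂volume.comap f :=
        lintegral_rnDeriv_mul hf.comap_absolutelyContinuous hξ.aemeasurable
    _ = ∫⁻ p, ξ p ∂volume.map f.symm :=
        congrArg (lintegral · ξ) f.toMeasurableEquiv.map_symm.symm
    _ = ∫⁻ p, ξ (f.symm p) := lintegral_map hξ f.symm.continuous.measurable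

end Jacobian

lemma ConvLocUnif.tendsto {fs : ℕ → HG ≃ₜ HG} {f : HG ≃ₜ HG}
    (h : ConvLocUnif (fun m => fs m) f) :
    Tendsto (fun m => (fs m : C(HG, HG))) atTop (𝓝 (f : C(HG, HG))) := by
  refine (ContinuousMap.tendsto_iff_forall_isCompact_tendstoUniformlyOn (α := Koranyi)
    (β := Koranyi)).2 fun K hK => Metric.tendstoUniformlyOn_iff.2 fun ε hε => ?_
  filter_upwards [h K hK ε hε] with m hm p hp
  rw [dist_comm, ← Koranyi.d_eq_dist]
  exact hm p hp

end Heis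

end

theorem stmt5_general (fs : ℕ → HG ≃ₜ HG) (f : HG ≃ₜ HG)
    (hqc : ∀ m, Heis.IsQC (fs m)) (hf : Heis.IsQC f)
    (hconv : Heis.ConvLocUnif (fun m => fs m) f)
    (ξ : HG → ℝ≥0) (hξ : Continuous ξ) (hξc : HasCompactSupport ξ) :
    (∀ m, AEMeasurable (Heis.jac (fs m)) volume ∧
      ∫⁻ p, (ξ p : ℝ≥0∞) * Heis.jac (fs m) p < ⊤) ∧
    (AEMeasurable (Heis.jac f) volume ∧ ∫⁻ p, (ξ p : ℝ≥0∞) * Heis.jac f p < ⊤) ∧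
    Tendsto (fun m => ∫⁻ p, (ξ p : ℝ≥0∞) * Heis.jac (fs m) p) atTop
      (𝓝 (∫⁻ p, (ξ p : ℝ≥0∞) * Heis.jac f p)) := by
  have hcov : ∀ g : HG ≃ₜ HG, Heis.IsQC g →
      ∫⁻ p, (ξ p : ℝ≥0∞) * Heis.jac g p = ∫⁻ p, (ξ (g.symm p) : ℝ≥0∞) :=
    fun g hg => hg.lintegral_mul_jac hξ.measurable.coe_nnreal_ennreal
  have hfin : ∀ g : HG ≃ₜ HG, Heis.IsQC g → AEMeasurable (Heis.jac g) volume ∧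
      ∫⁻ p, (ξ p : ℝ≥0∞) * Heis.jac g p < ⊤ := fun g hg =>
    ⟨hg.aemeasurable_jac, hcov g hg ▸ Heis.lintegral_lt_top_of_hasCompactSupport
      (hξ.comp g.symm.continuous) (hξc.comp_homeomorph g.symm)⟩
  refine ⟨fun m => hfin _ (hqc m), hfin f hf, ?_⟩
  simp only [hcov f hf, fun m => hcov (fs m) (hqc m)]
  exact Heis.tendsto_lintegral_comp_symm hconv.tendsto hξ hξc

theorem stmt5 (fs : ℕ → HG ≃ₜ HG) (f : HG ≃ₜ HG)
    (hqc : ∀ m, Heis.IsQC (fs m)) (hf : Heis.IsQC f)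
    (hconv : Heis.ConvLocUnif (fun m => fs m) f)
    (hinv : ∀ p : HG, Tendsto (fun m => (fs m).symm p) atTop (𝓝 (f.symm p)))
    (ξ : HG → ℝ) (hξ : ContDiff ℝ (⊤ : ℕ∞) ξ) (hξc : HasCompactSupport ξ) (hξ0 : ∀ p, 0 ≤ ξ p) :
    -- the integrals exist and are finite
    (∀ m, AEMeasurable (Heis.jac (fs m)) volume ∧
      ∫⁻ p, ENNReal.ofReal (ξ p) * Heis.jac (fs m) p < ⊤) ∧
    (AEMeasurable (Heis.jac f) volume ∧ ∫⁻ p, ENNReal.ofReal (ξ p) * Heis.jac f p < ⊤) ∧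
    -- and they converge
    Tendsto (fun m => ∫⁻ p, ENNReal.ofReal (ξ p) * Heis.jac (fs m) p) atTop
      (𝓝 (∫⁻ p, ENNReal.ofReal (ξ p) * Heis.jac f p)) :=
  stmt5_general fs f hqc hf hconv (fun p => (ξ p).toNNReal)
    (continuous_real_toNNReal.comp hξ.continuous) (hξc.comp_left Real.toNNReal_zero)
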